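/- arXiv:1901.01218 — 5 statements merged into one kernel-verified Lean document; each statement's English description precedes it below -/
import Mathlib

section
/- The map t ↦ k̃(t) := θ₂(e^{-πt})² / θ₃(e^{-πt})² is a strictly decreasing bijection from (0,∞) onto (0,1). -/
noncomputable section

/-- Theta-null `θ₂(q) = ∑_{k∈ℤ} q^{(k+1/2)²}`. -/
def theta2 (q : ℝ) : ℝ := ∑' k : ℤ, q ^ (((k : ℝ) + 1/2)^2)

/-- Theta-null `θ₃(q) = ∑_{k∈ℤ} q^{k²}`. -/
def theta3 (q : ℝ) : ℝ := ∑' k : ℤ, q ^ (k^2)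

/-- Theta-null `θ₄(q) = ∑_{k∈ℤ} (-1)^k q^{k²}`. -/
def theta4 (q : ℝ) : ℝ := ∑' k : ℤ, (-1 : ℝ) ^ k * q ^ (k^2)

/-- Jacobi theta function `θ₃(z,q) = ∑_{k∈ℤ} q^{k²} e^{2πikz}` (real-valued for real z, q∈(0,1)). -/
def jTheta3 (z q : ℝ) : ℝ :=
  (∑' k : ℤ, (q : ℂ) ^ (k^2) * Complex.exp (2 * Real.pi * Complex.I * k * z)).re

/-- Jacobi theta function as a complex number. -/
def jTheta3C (z q : ℝ) : ℂ :=
  ∑' k : ℤ, (q : ℂ) ^ (k^2) * Complex.exp (2 * Real.pi * Complex.I * k * z)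

/-- Gauss hypergeometric series `₂F₁(a,b;c;x)`. -/
def hyp2F1 (a b c x : ℝ) : ℝ :=
  ∑' n : ℕ, ((ascPochhammer ℝ n).eval a * (ascPochhammer ℝ n).eval b /
    (ascPochhammer ℝ n).eval c) * x ^ n / (n.factorial : ℝ)

/-- Borwein cubic theta function `a(q)`. -/
def borA (q : ℝ) : ℝ := ∑' p : ℤ × ℤ, q ^ (p.1^2 + p.1 * p.2 + p.2^2)

/-- Borwein cubic theta function `b(q)` (real-valued). -/
def borB (q : ℝ) : ℝ :=
  (∑' p : ℤ × ℤ, (q : ℂ) ^ (p.1^2 + p.1 * p.2 + p.2^2) *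
    Complex.exp (2 * Real.pi * Complex.I * (((p.1 : ℝ) - (p.2 : ℝ)) / 3))).re

/-- Borwein cubic theta function `c(q)`. -/
def borC (q : ℝ) : ℝ :=
  ∑' p : ℤ × ℤ, q ^ ((((p.1 : ℝ)) + 1/3)^2 + ((p.1 : ℝ) + 1/3) * ((p.2 : ℝ) + 1/3) +
    (((p.2 : ℝ)) + 1/3)^2)

/-- Periodized Gaussian (heat kernel) on the torus ℝ²/(Sℤ²). -/
def heatK (S : Matrix.SpecialLinearGroup (Fin 2) ℝ) (t : ℝ) (z : Fin 2 → ℝ) : ℝ :=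
  (1/t) * ∑' l : Fin 2 → ℤ,
    Real.exp (-(Real.pi / t) *
      (((S : Matrix (Fin 2) (Fin 2) ℝ).mulVec (fun i => (l i : ℝ) + z i) 0)^2 +
       ((S : Matrix (Fin 2) (Fin 2) ℝ).mulVec (fun i => (l i : ℝ) + z i) 1)^2))

end

noncomputable section

/-- The kernel `∑ exp(-π (n+a)² t)`. -/
def ekK (a t : ℝ) : ℝ := HurwitzZeta.evenKernel (a : UnitAddCircle) t

lemma ekK_hasSum (a : ℝ) {t : ℝ} (ht : 0 < t) :
    HasSum (fun n : ℤ => Real.exp (-Real.pi * (n + a) ^ 2 * t)) (ekK a t) :=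
  HurwitzZeta.hasSum_int_evenKernel a ht

lemma ekK_one (t : ℝ) : ekK 1 t = ekK 0 t := by
  unfold ekK
  congr 1
  exact AddCircle.coe_period (1 : ℝ)

/-- the index-two sublattice decomposition -/
def ekMap : (ℤ × ℤ) ⊕ (ℤ × ℤ) → ℤ × ℤ :=
  Sum.elim (fun p => (p.1 + p.2, p.1 - p.2)) (fun p => (p.1 + p.2 + 1, p.1 - p.2))

lemma ekMap_bij : Function.Bijective ekMap := by
  constructor
  · rintro (⟨a, b⟩ | ⟨a, b⟩) (⟨c, d⟩ | ⟨c, d⟩) h <;>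
      simp only [ekMap, Sum.elim_inl, Sum.elim_inr, Prod.mk.injEq] at h <;>
      simp only [Sum.inl.injEq, Sum.inr.injEq, Prod.mk.injEq, reduceCtorEq] <;> omega
  · rintro ⟨m, n⟩
    rcases Int.even_or_odd' (m + n) with ⟨k, hk | hk⟩
    · refine ⟨Sum.inl (k, m - k), ?_⟩
      simp only [ekMap, Sum.elim_inl, Prod.mk.injEq]
      omega
    · refine ⟨Sum.inr (k, m - k - 1), ?_⟩
      simp only [ekMap, Sum.elim_inr, Prod.mk.injEq]
      omega

lemma ekK_prod (a b : ℝ) {t : ℝ} (ht : 0 < t) :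
    HasSum (fun p : ℤ × ℤ => Real.exp (-Real.pi * (p.1 + a) ^ 2 * t) *
      Real.exp (-Real.pi * (p.2 + b) ^ 2 * t)) (ekK a t * ekK b t) := by
  refine (ekK_hasSum a ht).mul (ekK_hasSum b ht) ?_
  exact (ekK_hasSum a ht).summable.mul_of_nonneg (ekK_hasSum b ht).summable
    (fun _ => (Real.exp_pos _).le) (fun _ => (Real.exp_pos _).le)

lemma ekK_quad (c : ℝ) {t : ℝ} (ht : 0 < t) :
    ekK c t ^ 2 = ekK c (2 * t) * ekK 0 (2 * t) + ekK (c + 1 / 2) (2 * t) * ekK (1 / 2) (2 * t) := by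
  have h2 : 0 < 2 * t := by linarith
  have h := ekK_prod c c ht
  rw [← (Equiv.ofBijective ekMap ekMap_bij).hasSum_iff] at h
  have h' := HasSum.sum (f := (fun p : ℤ × ℤ => Real.exp (-Real.pi * (p.1 + c) ^ 2 * t) *
      Real.exp (-Real.pi * (p.2 + c) ^ 2 * t)) ∘ (Equiv.ofBijective ekMap ekMap_bij))
      (a := ekK c (2 * t) * ekK 0 (2 * t)) (b := ekK (c + 1 / 2) (2 * t) * ekK (1 / 2) (2 * t))
      ?_ ?_
  · rw [sq]; exact h.unique h'
  · convert ekK_prod c 0 h2 using 1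
    ext ⟨a, b⟩
    simp only [Function.comp, Equiv.ofBijective_apply, ekMap, Sum.elim_inl, ← Real.exp_add]
    push_cast
    congr 1; ring
  · convert ekK_prod (c + 1 / 2) (1 / 2) h2 using 1
    ext ⟨a, b⟩
    simp only [Function.comp, Equiv.ofBijective_apply, ekMap, Sum.elim_inr, ← Real.exp_add]
    push_cast
    congr 1; ring

lemma ekK_pos (a : ℝ) {t : ℝ} (ht : 0 < t) : 0 < ekK a t := by
  rw [← (ekK_hasSum a ht).tsum_eq]
  exact (ekK_hasSum a ht).summable.tsum_pos (fun _ => (Real.exp_pos _).le) 0 (Real.exp_pos _)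

lemma ekK_zero_anti {s t : ℝ} (hs : 0 < s) (hst : s ≤ t) : ekK 0 t ≤ ekK 0 s := by
  refine hasSum_le ?_ (ekK_hasSum 0 (hs.trans_le hst)) (ekK_hasSum 0 hs)
  intro n
  apply Real.exp_le_exp.mpr
  have : 0 ≤ Real.pi * ((n : ℝ) + 0) ^ 2 := by positivity
  nlinarith

lemma one_le_ekK_zero {t : ℝ} (ht : 0 < t) : 1 ≤ ekK 0 t := by
  have := le_hasSum (ekK_hasSum 0 ht) 0 (fun _ _ => (Real.exp_pos _).le)
  simpa using this

lemma le_ekK_half {t : ℝ} (ht : 0 < t) : Real.exp (-(Real.pi / 4 * t)) ≤ ekK (1 / 2) t := by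
  have := le_hasSum (ekK_hasSum (1 / 2) ht) 0 (fun _ _ => (Real.exp_pos _).le)
  refine le_trans (le_of_eq ?_) this
  push_cast
  congr 1; ring

lemma ekK_half_anti {s t : ℝ} (hs : 0 < s) (hst : s ≤ t) :
    ekK (1 / 2) t ≤ ekK (1 / 2) s * Real.exp (Real.pi / 4 * s) * Real.exp (-(Real.pi / 4 * t)) := by
  rw [mul_assoc]
  refine hasSum_le ?_ (ekK_hasSum (1 / 2) (hs.trans_le hst)) ((ekK_hasSum (1 / 2) hs).mul_right _)
  intro n
  simp only [← Real.exp_add]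
  apply Real.exp_le_exp.mpr
  have h1 : (0 : ℝ) ≤ (n : ℝ) ^ 2 + n := by
    have : (0 : ℤ) ≤ n ^ 2 + n := by
      rcases le_or_gt 0 n with h | h <;> nlinarith
    exact_mod_cast this
  have : 0 ≤ Real.pi * ((n : ℝ) ^ 2 + n) * (t - s) :=
    mul_nonneg (mul_nonneg Real.pi_pos.le h1) (by linarith)
  nlinarith

/-- the ratio `θ₂/θ₃` -/
def ekr (t : ℝ) : ℝ := ekK (1 / 2) t / ekK 0 t

lemma ekr_pos {t : ℝ} (ht : 0 < t) : 0 < ekr t := div_pos (ekK_pos _ ht) (ekK_pos _ ht)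

lemma ekr_rec {t : ℝ} (ht : 0 < t) : ekr t ^ 2 * (1 + ekr (2 * t) ^ 2) = 2 * ekr (2 * t) := by
  have h2 : 0 < 2 * t := by linarith
  have h0 := ekK_quad 0 ht
  have h1 := ekK_quad (1 / 2) ht
  rw [show (1 / 2 : ℝ) + 1 / 2 = 1 by norm_num, ekK_one] at h1
  rw [zero_add] at h0
  have p0 := ekK_pos 0 h2
  have p1 := ekK_pos (1 / 2) h2
  unfold ekr
  rw [div_pow, h0, h1]
  field_simp
  ring

lemma ekr_le_one {t : ℝ} (ht : 0 < t) : ekr t ≤ 1 := by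
  have h := ekr_rec ht
  have := ekr_pos ht
  by_contra! hc
  have h1 : 1 < ekr t ^ 2 := one_lt_pow₀ hc two_ne_zero
  nlinarith [sq_nonneg (1 - ekr (2 * t)),
    mul_pos (sub_pos.mpr h1) (show 0 < 1 + ekr (2 * t) ^ 2 by positivity)]

lemma ekr_step {s t : ℝ} (hs : 0 < s) (ht : 0 < t) (h : ekr s ≤ ekr t) :
    ekr (2 * s) ≤ ekr (2 * t) := by
  have hs2 : 0 < 2 * s := by linarith
  have ht2 : 0 < 2 * t := by linarith
  have e1 := ekr_rec hs
  have e2 := ekr_rec ht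
  have hsq : ekr s ^ 2 ≤ ekr t ^ 2 := pow_le_pow_left₀ (ekr_pos hs).le h 2
  have a1 := ekr_le_one hs2
  have a2 := ekr_le_one ht2
  have p1 := ekr_pos hs2
  have p2 := ekr_pos ht2
  generalize ekr (2 * s) = x at *
  generalize ekr (2 * t) = y at *
  by_contra! hc
  have hxy : y * (1 + x ^ 2) < x * (1 + y ^ 2) := by
    nlinarith [mul_pos (sub_pos.mpr hc) (show 0 < 1 - x * y by nlinarith)]
  have h3 : ekr s ^ 2 * (1 + x ^ 2) * (1 + y ^ 2) ≤ ekr t ^ 2 * (1 + x ^ 2) * (1 + y ^ 2) := by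
    gcongr
  have h4 : ekr t ^ 2 * (1 + x ^ 2) * (1 + y ^ 2) = 2 * y * (1 + x ^ 2) := by
    rw [← e2]; ring
  rw [e1, h4] at h3
  linarith

lemma ekr_strictAnti : StrictAntiOn ekr (Set.Ioi 0) := by
  intro s hs t ht hst
  have hs : 0 < s := hs
  have ht : 0 < t := ht
  by_contra! hc
  have hn : ∀ n : ℕ, ekr (2 ^ n * s) ≤ ekr (2 ^ n * t) := by
    intro n
    induction n with
    | zero => simpa using hc
    | succ n ih =>
      have := ekr_step (by positivity) (by positivity) ih
      rwa [← mul_assoc, ← mul_assoc, ← pow_succ'] at this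
  obtain ⟨C, hC⟩ : ∃ C, C = ekK (1 / 2) t * Real.exp (Real.pi / 4 * t) := ⟨_, rfl⟩
  have hb : ∀ n : ℕ, Real.exp (2 ^ n * (Real.pi / 4 * (t - s))) ≤ C * ekK 0 s := by
    intro n
    have h1 : (1 : ℝ) ≤ 2 ^ n := one_le_pow₀ (by norm_num)
    have s1 : 0 < 2 ^ n * s := by positivity
    have t1 : 0 < 2 ^ n * t := by positivity
    have hA := le_ekK_half s1
    have hB := ekK_half_anti ht (show t ≤ 2 ^ n * t by nlinarith)
    have hD := ekK_zero_anti hs (show s ≤ 2 ^ n * s by nlinarith)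
    have hE := one_le_ekK_zero t1
    rw [← hC] at hB
    have h := hn n
    unfold ekr at h
    rw [div_le_div_iff₀ (ekK_pos _ s1) (ekK_pos _ t1)] at h
    have q1 := ekK_pos (1 / 2) s1
    have q2 := ekK_pos (1 / 2) t1
    have key : Real.exp (-(Real.pi / 4 * (2 ^ n * s))) ≤
        C * Real.exp (-(Real.pi / 4 * (2 ^ n * t))) * ekK 0 s := by
      calc _ ≤ ekK (1 / 2) (2 ^ n * s) * 1 := by rw [mul_one]; exact hA
        _ ≤ ekK (1 / 2) (2 ^ n * s) * ekK 0 (2 ^ n * t) := by gcongr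
        _ ≤ ekK (1 / 2) (2 ^ n * t) * ekK 0 (2 ^ n * s) := h
        _ ≤ ekK (1 / 2) (2 ^ n * t) * ekK 0 s := by gcongr
        _ ≤ _ := by
          have := ekK_pos 0 hs
          gcongr
    have e : Real.exp (2 ^ n * (Real.pi / 4 * (t - s))) =
        Real.exp (-(Real.pi / 4 * (2 ^ n * s))) * Real.exp (Real.pi / 4 * (2 ^ n * t)) := by
      rw [← Real.exp_add]; congr 1; ring
    rw [e]
    calc _ ≤ C * Real.exp (-(Real.pi / 4 * (2 ^ n * t))) * ekK 0 s *
          Real.exp (Real.pi / 4 * (2 ^ n * t)) := by gcongr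
      _ = C * ekK 0 s * (Real.exp (-(Real.pi / 4 * (2 ^ n * t))) *
          Real.exp (Real.pi / 4 * (2 ^ n * t))) := by ring
      _ = _ := by rw [← Real.exp_add]; simp
  have hd : 0 < Real.pi / 4 * (t - s) := by
    have := Real.pi_pos
    have : 0 < t - s := by linarith
    positivity
  have hlim : Filter.Tendsto (fun n : ℕ => Real.exp (2 ^ n * (Real.pi / 4 * (t - s))))
      Filter.atTop Filter.atTop :=
    Real.tendsto_exp_atTop.comp
      ((tendsto_pow_atTop_atTop_of_one_lt (by norm_num : (1 : ℝ) < 2)).atTop_mul_const hd)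
  obtain ⟨n, hn'⟩ := (hlim.eventually_gt_atTop (C * ekK 0 s)).exists
  exact absurd (hb n) (not_le.mpr hn')

lemma ekr_lt_one {t : ℝ} (ht : 0 < t) : ekr t < 1 :=
  (ekr_strictAnti (show t / 2 ∈ Set.Ioi (0 : ℝ) from half_pos ht) ht (half_lt_self ht)).trans_le
    (ekr_le_one (half_pos ht))

lemma ekr_cont : ContinuousOn ekr (Set.Ioi 0) :=
  (HurwitzZeta.continuousOn_evenKernel _).div (HurwitzZeta.continuousOn_evenKernel _)
    (fun _ ht => (ekK_pos 0 ht).ne')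

lemma ekr_small {y : ℝ} (hy : 0 < y) : ∃ t, 0 < t ∧ ekr t < y := by
  have hn : ∀ n : ℕ, ekr (2 ^ n) ≤ ekr 1 ^ n := by
    intro n
    induction n with
    | zero => simpa using ekr_le_one one_pos
    | succ n ih =>
      have hp : (0 : ℝ) < 2 ^ n := by positivity
      have h := ekr_rec hp
      rw [← pow_succ'] at h
      have hp' : (0 : ℝ) < 2 ^ (n + 1) := by positivity
      have a := ekr_pos hp'
      have b := ekr_le_one hp'
      have c : ekr (2 ^ n) ≤ ekr 1 :=
        ekr_strictAnti.antitoneOn (Set.mem_Ioi.mpr one_pos) hp (one_le_pow₀ (by norm_num))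
      have d := ekr_pos hp
      have e := ekr_pos one_pos
      have h1 : ekr (2 ^ (n + 1)) ≤ ekr (2 ^ n) ^ 2 := by
        have : ekr (2 ^ (n + 1)) ^ 2 ≤ 1 := pow_le_one₀ a.le b
        nlinarith [sq_nonneg (ekr (2 ^ n))]
      calc _ ≤ ekr (2 ^ n) ^ 2 := h1
        _ = ekr (2 ^ n) * ekr (2 ^ n) := sq _
        _ ≤ ekr 1 ^ n * ekr 1 := by gcongr
        _ = _ := (pow_succ _ _).symm
  obtain ⟨n, h⟩ := exists_pow_lt_of_lt_one hy (ekr_lt_one one_pos)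
  exact ⟨2 ^ n, by positivity, (hn n).trans_lt h⟩

lemma ekr_large {y : ℝ} (hy : y < 1) : ∃ t, 0 < t ∧ y < ekr t := by
  by_contra! hc
  have hp : ∀ n : ℕ, (0 : ℝ) < (1 / 2) ^ n := fun n => by positivity
  have hm : Monotone (fun n : ℕ => ekr ((1 / 2) ^ n)) := by
    intro m n hmn
    exact ekr_strictAnti.antitoneOn (hp n) (hp m)
      (pow_le_pow_of_le_one (by norm_num) (by norm_num) hmn)
  have hb : BddAbove (Set.range (fun n : ℕ => ekr ((1 / 2) ^ n))) :=
    ⟨y, by rintro _ ⟨n, rfl⟩; exact hc _ (hp n)⟩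
  have hl := tendsto_atTop_ciSup hm hb
  generalize (⨆ n : ℕ, ekr ((1 / 2) ^ n)) = L at hl
  have hL1 : L ≤ y := le_of_tendsto' hl (fun n => hc _ (hp n))
  have hL0 : 0 < L :=
    (ekr_pos (hp 0)).trans_le (hm.ge_of_tendsto hl 0)
  have hl' := hl.comp (Filter.tendsto_add_atTop_nat 1)
  have hE : ∀ n : ℕ, ekr ((1 / 2) ^ (n + 1)) ^ 2 * (1 + ekr ((1 / 2) ^ n) ^ 2) =
      2 * ekr ((1 / 2) ^ n) := by
    intro n
    have := ekr_rec (hp (n + 1))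
    rwa [show (2 : ℝ) * (1 / 2) ^ (n + 1) = (1 / 2) ^ n by rw [pow_succ]; ring] at this
  have h1 := (hl'.pow 2).mul ((hl.pow 2).const_add 1)
  have h2 := hl.const_mul 2
  have hq : L ^ 2 * (1 + L ^ 2) = 2 * L :=
    tendsto_nhds_unique (h1.congr hE) h2
  have hq' : L * (1 + L ^ 2) = 2 := by
    apply mul_left_cancel₀ hL0.ne'
    linarith
  nlinarith [sq_nonneg L, pow_lt_one₀ hL0.le (hL1.trans_lt hy) two_ne_zero]

lemma theta2_eq {t : ℝ} (ht : 0 < t) : theta2 (Real.exp (-Real.pi * t)) = ekK (1 / 2) t := by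
  rw [← (ekK_hasSum (1 / 2) ht).tsum_eq, theta2]
  congr 1; ext k
  rw [← Real.exp_mul]
  congr 1; ring

lemma theta3_eq {t : ℝ} (ht : 0 < t) : theta3 (Real.exp (-Real.pi * t)) = ekK 0 t := by
  rw [← (ekK_hasSum 0 ht).tsum_eq, theta3]
  congr 1; ext k
  rw [← Real.rpow_intCast, ← Real.exp_mul]
  push_cast
  congr 1; ring

lemma ekF_eq : Set.EqOn (fun t => ekr t ^ 2) (fun t : ℝ => theta2 (Real.exp (-Real.pi * t)) ^ 2 /
        theta3 (Real.exp (-Real.pi * t)) ^ 2) (Set.Ioi 0) := by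
  intro t ht
  simp only [theta2_eq ht, theta3_eq ht, ekr, div_pow]

end

theorem elliptic_modulus_strictAnti_bijOn :
    StrictAntiOn (fun t : ℝ => theta2 (Real.exp (-Real.pi * t)) ^ 2 /
        theta3 (Real.exp (-Real.pi * t)) ^ 2) (Set.Ioi 0) ∧
    Set.BijOn (fun t : ℝ => theta2 (Real.exp (-Real.pi * t)) ^ 2 /
        theta3 (Real.exp (-Real.pi * t)) ^ 2) (Set.Ioi 0) (Set.Ioo 0 1) := by
  have hanti : StrictAntiOn (fun t => ekr t ^ 2) (Set.Ioi 0) := fun s hs t ht h =>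
    pow_lt_pow_left₀ (ekr_strictAnti hs ht h) (ekr_pos ht).le two_ne_zero
  refine ⟨hanti.congr ekF_eq, Set.BijOn.congr ⟨?_, hanti.injOn, ?_⟩ ekF_eq⟩
  · intro t ht
    exact ⟨pow_pos (ekr_pos ht) 2, pow_lt_one₀ (ekr_pos ht).le (ekr_lt_one ht) two_ne_zero⟩
  · intro y hy
    have hs0 : 0 < Real.sqrt y := Real.sqrt_pos.mpr hy.1
    have hs1 : Real.sqrt y < 1 := (Real.sqrt_lt' one_pos).mpr (by simpa using hy.2)
    obtain ⟨a, ha, ha'⟩ := ekr_small hs0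
    obtain ⟨b, hb, hb'⟩ := ekr_large hs1
    obtain ⟨c, hc, hc'⟩ := isPreconnected_Ioi.intermediate_value (Set.mem_Ioi.mpr ha)
      (Set.mem_Ioi.mpr hb) ekr_cont ⟨ha'.le, hb'.le⟩
    exact ⟨c, hc, by simp only [hc', Real.sq_sqrt hy.1.le]⟩
end

section
/- Ramanujan's identity: for q ∈ (0,1), with elliptic modulus k = θ₂(q)²/θ₃(q)², one has ₂F₁(1/2, 1/2; 1; k²) = θ₃(q)². -/
namespace RamAux
open Finset

noncomputable def cc (n : ℕ) : ℝ := ∏ i ∈ range n, (2 * (i : ℝ) + 1) / (2 * i + 2)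

lemma cc_zero : cc 0 = 1 := by simp [cc]
lemma cc_succ (n : ℕ) : cc (n+1) = cc n * ((2 * (n : ℝ) + 1) / (2 * n + 2)) := by
  rw [cc, prod_range_succ, ← cc]
lemma cc_succ' (n : ℕ) : 2 * ((n:ℝ)+1) * cc (n+1) = (2 * (n : ℝ) + 1) * cc n := by
  rw [cc_succ]; field_simp
lemma cc_pos (n : ℕ) : 0 < cc n := prod_pos fun i _ => by positivity
lemma cc_le_one (n : ℕ) : cc n ≤ 1 := by
  apply prod_le_one
  · intro i _; positivity
  · intro i _; rw [div_le_one (by positivity)]; linarith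

lemma cc_poch (n : ℕ) : (ascPochhammer ℝ n).eval (1/2) = cc n * n.factorial := by
  induction n with
  | zero => simp [cc_zero]
  | succ n ih =>
    rw [ascPochhammer_succ_right, Polynomial.eval_mul, ih, Nat.factorial_succ, cc_succ]
    simp
    field_simp
    ring

lemma hyp_eq (x : ℝ) : hyp2F1 (1/2) (1/2) 1 x = ∑' n, cc n ^ 2 * x ^ n := by
  unfold hyp2F1
  congr 1; ext n
  rw [cc_poch, ascPochhammer_eval_one]
  have : (n.factorial : ℝ) ≠ 0 := by positivity
  field_simp

lemma cc_conv (n : ℕ) : ∑ p ∈ antidiagonal n, cc p.1 * cc p.2 = 1 := by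
  induction n with
  | zero => simp [cc_zero]
  | succ n ih =>
    have h1 : ((n:ℝ)+1) * ∑ p ∈ antidiagonal (n+1), cc p.1 * cc p.2
        = ∑ p ∈ antidiagonal (n+1), (p.1:ℝ) * cc p.1 * cc p.2 +
          ∑ p ∈ antidiagonal (n+1), (p.2:ℝ) * cc p.1 * cc p.2 := by
      rw [mul_sum, ← sum_add_distrib]
      refine sum_congr rfl fun p hp => ?_
      have : p.1 + p.2 = n + 1 := by simpa using hp
      have : (p.1:ℝ) + p.2 = n + 1 := by exact_mod_cast this
      rw [← this]; ring
    have h2 : ∑ p ∈ antidiagonal (n+1), (p.1:ℝ) * cc p.1 * cc p.2 =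
        ∑ p ∈ antidiagonal n, ((p.1:ℝ)+1/2) * cc p.1 * cc p.2 := by
      rw [Finset.Nat.sum_antidiagonal_succ]
      simp only [Nat.cast_zero, zero_mul, zero_add]
      refine sum_congr rfl fun p hp => ?_
      have := cc_succ' p.1
      push_cast
      linear_combination (cc p.2 / 2) * this
    have h3 : ∑ p ∈ antidiagonal (n+1), (p.2:ℝ) * cc p.1 * cc p.2 =
        ∑ p ∈ antidiagonal n, ((p.2:ℝ)+1/2) * cc p.1 * cc p.2 := by
      rw [Finset.Nat.sum_antidiagonal_succ']
      simp only [Nat.cast_zero, zero_mul, zero_add]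
      refine sum_congr rfl fun p hp => ?_
      have := cc_succ' p.2
      push_cast
      linear_combination (cc p.1 / 2) * this
    have h4 : ((n:ℝ)+1) * ∑ p ∈ antidiagonal n, cc p.1 * cc p.2
        = ∑ p ∈ antidiagonal n, ((p.1:ℝ)+1/2) * cc p.1 * cc p.2 +
          ∑ p ∈ antidiagonal n, ((p.2:ℝ)+1/2) * cc p.1 * cc p.2 := by
      rw [mul_sum, ← sum_add_distrib]
      refine sum_congr rfl fun p hp => ?_
      have : p.1 + p.2 = n := by simpa using hp
      have : (p.1:ℝ) + p.2 = n := by exact_mod_cast this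
      rw [← this]; ring
    rw [h2, h3, ← h4, ih] at h1
    have : ((n:ℝ)+1) ≠ 0 := by positivity
    exact mul_left_cancel₀ this h1

lemma cc_norm_summable (z : ℂ) (hz : ‖z‖ < 1) : Summable fun n => ‖(cc n : ℂ) * z ^ n‖ := by
  refine Summable.of_nonneg_of_le (fun _ => norm_nonneg _) (fun n => ?_)
    (summable_geometric_of_lt_one (norm_nonneg z) hz)
  rw [norm_mul, norm_pow, Complex.norm_real, Real.norm_of_nonneg (cc_pos n).le]
  exact mul_le_of_le_one_left (by positivity) (cc_le_one n)

noncomputable def ff (z : ℂ) : ℂ := ∑' n, (cc n : ℂ) * z ^ n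

lemma ff_sq (z : ℂ) (hz : ‖z‖ < 1) : ff z * ff z = (1 - z)⁻¹ := by
  unfold ff
  rw [tsum_mul_tsum_eq_tsum_sum_antidiagonal_of_summable_norm (cc_norm_summable z hz)
    (cc_norm_summable z hz), ← tsum_geometric_of_norm_lt_one hz]
  congr 1; ext n
  have : ∀ p ∈ antidiagonal n, (cc p.1 : ℂ) * z ^ p.1 * ((cc p.2 : ℂ) * z ^ p.2) =
      ((cc p.1 * cc p.2 : ℝ) : ℂ) * z ^ n := by
    intro p hp
    have : p.1 + p.2 = n := by simpa using hp
    rw [← this]; push_cast; ring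
  rw [sum_congr rfl this, ← sum_mul, ← Complex.ofReal_sum, cc_conv]; simp

lemma ff_norm (z : ℂ) (hz : ‖z‖ < 1) : ff z * star (ff z) = ((‖1 - z‖⁻¹ : ℝ) : ℂ) := by
  have h := congrArg norm (ff_sq z hz)
  rw [norm_mul, norm_inv] at h
  rw [← h]
  have := Complex.mul_conj' (ff z)
  rw [starRingEnd_apply] at this
  rw [this]; push_cast; ring

lemma cc_real (x : ℝ) (h0 : 0 ≤ x) (h1 : x < 1) : HasSum (fun n => cc n * x ^ n) (√(1-x))⁻¹ := by
  have hz : ‖(x:ℂ)‖ < 1 := by simpa [abs_of_nonneg h0] using h1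
  have hs : Summable (fun n => cc n * x ^ n) := by
    have := cc_norm_summable x hz
    refine this.congr fun n => ?_
    rw [← Complex.ofReal_pow, ← Complex.ofReal_mul, Complex.norm_real, Real.norm_of_nonneg]
    have := cc_pos n
    positivity
  have h := ff_sq x hz
  have e : ff x = ((∑' n, cc n * x ^ n : ℝ) : ℂ) := by
    unfold ff; push_cast; rfl
  rw [e] at h
  have h : (∑' n, cc n * x ^ n) * (∑' n, cc n * x ^ n) = (1-x)⁻¹ := by exact_mod_cast h
  have hnn : 0 ≤ ∑' n, cc n * x ^ n := tsum_nonneg fun n => by have := cc_pos n; positivity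
  rw [← Real.sqrt_inv, ← h, Real.sqrt_mul_self hnn]
  exact hs.hasSum

open MeasureTheory in
lemma hasSum_ii {ι : Type*} [Countable ι] {E : Type*} [NormedAddCommGroup E] [NormedSpace ℝ E]
    {a b : ℝ} {F : ι → ℝ → E} {f : ℝ → E} (bd : ι → ℝ) (hb : Summable bd)
    (hc : ∀ i, Continuous (F i)) (hbd : ∀ i t, ‖F i t‖ ≤ bd i)
    (hs : ∀ t, HasSum (fun i => F i t) (f t)) :
    HasSum (fun i => ∫ t in a..b, F i t) (∫ t in a..b, f t) := by
  apply intervalIntegral.hasSum_integral_of_dominated_convergence (fun i _ => bd i)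
  · exact fun i => (hc i).aestronglyMeasurable
  · exact fun i => .of_forall fun t _ => hbd i t
  · exact .of_forall fun t _ => hb
  · exact intervalIntegrable_const
  · exact .of_forall fun t _ => hs t

/-- the point on the circle -/
noncomputable def ww (k t : ℝ) : ℂ := -(k : ℂ) * Complex.exp (2 * Complex.I * t)

lemma ww_norm (k t : ℝ) (hk : 0 ≤ k) : ‖ww k t‖ = k := by
  have : (2 * Complex.I * t : ℂ) = ((2 * t : ℝ) : ℂ) * Complex.I := by push_cast; ring
  rw [ww, norm_mul, this, Complex.norm_exp_ofReal_mul_I]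
  simp [abs_of_nonneg hk]

lemma ww_cont (k : ℝ) : Continuous (ww k) := by unfold ww; fun_prop

lemma ww_int (k : ℝ) (m n : ℕ) :
    ∫ t in (0:ℝ)..Real.pi, (ww k t) ^ m * star ((ww k t) ^ n) =
      if m = n then (Real.pi * k ^ (2 * n) : ℂ) else 0 := by
  have e : ∀ t : ℝ, (ww k t) ^ m * star ((ww k t) ^ n) =
      (-(k:ℂ)) ^ (m + n) * Complex.exp ((2 * Complex.I * ((m:ℂ) - n)) * t) := by
    intro t
    have h1 : star (ww k t) = -(k:ℂ) * Complex.exp (-(2 * Complex.I * t)) := by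
      rw [← starRingEnd_apply]
      unfold ww
      rw [map_mul, ← Complex.exp_conj]
      simp [Complex.conj_ofNat]
    rw [star_pow, h1, ww, mul_pow, mul_pow, ← Complex.exp_nat_mul, ← Complex.exp_nat_mul]
    rw [show (2 * Complex.I * ((m:ℂ) - n)) * t = m * (2 * Complex.I * t) + n * (-(2 * Complex.I * t))
      by ring, Complex.exp_add]
    ring
  simp_rw [e]
  rw [intervalIntegral.integral_const_mul]
  split_ifs with h
  · subst h
    simp
    rw [← two_mul, pow_mul]; ring_nf
  · have hc : (2 * Complex.I * ((m:ℂ) - n)) ≠ 0 := by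
      have : (m:ℂ) - n ≠ 0 := by rw [sub_ne_zero]; exact_mod_cast h
      simp [this, Complex.I_ne_zero]
    rw [integral_exp_mul_complex hc]
    have : Complex.exp (2 * Complex.I * ((m:ℂ) - n) * Real.pi) = 1 := by
      rw [Complex.exp_eq_one_iff]
      exact ⟨(m:ℤ) - n, by push_cast; ring⟩
    rw [this]; simp

lemma part1 (k : ℝ) (h0 : 0 ≤ k) (h1 : k < 1) :
    HasSum (fun n => Real.pi * (cc n ^ 2 * (k ^ 2) ^ n))
      (∫ t in (0:ℝ)..Real.pi, ‖1 - ww k t‖⁻¹) := by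
  have hw : ∀ t, ‖ww k t‖ < 1 := fun t => by rw [ww_norm k t h0]; exact h1
  have hg := summable_geometric_of_lt_one h0 h1
  have key := hasSum_ii (a := 0) (b := Real.pi)
    (F := fun (p : ℕ × ℕ) t => ((cc p.1 : ℂ) * ww k t ^ p.1) * star ((cc p.2 : ℂ) * ww k t ^ p.2))
    (f := fun t => ((‖1 - ww k t‖⁻¹ : ℝ) : ℂ)) (fun p => k ^ p.1 * k ^ p.2)
    (hg.mul_of_nonneg hg (fun _ => by positivity) (fun _ => by positivity))
    (fun p => by have := ww_cont k; fun_prop)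
    (fun p t => by
      rw [norm_mul, norm_star, norm_mul, norm_mul, norm_pow, norm_pow, ww_norm k t h0,
        Complex.norm_real, Complex.norm_real, Real.norm_of_nonneg (cc_pos _).le,
        Real.norm_of_nonneg (cc_pos _).le]
      have a1 := cc_le_one p.1
      have a2 := cc_le_one p.2
      have b1 := cc_pos p.1
      have b2 := cc_pos p.2
      apply mul_le_mul
      · exact mul_le_of_le_one_left (by positivity) a1
      · exact mul_le_of_le_one_left (by positivity) a2
      · positivity
      · positivity)
    (fun t => by
      rw [← ff_norm _ (hw t)]
      have s1 := cc_norm_summable _ (hw t)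
      have s2 : Summable fun n => ‖star ((cc n : ℂ) * ww k t ^ n)‖ := by simpa only [norm_star] using s1
      have := summable_mul_of_summable_norm s1 s2
      have e := tsum_mul_tsum_of_summable_norm s1 s2
      rw [← tsum_star] at e
      unfold ff
      rw [e]
      exact this.hasSum)
  have e : ∀ p : ℕ × ℕ, ∫ t in (0:ℝ)..Real.pi,
      ((cc p.1 : ℂ) * ww k t ^ p.1) * star ((cc p.2 : ℂ) * ww k t ^ p.2) =
      if p.1 = p.2 then ((Real.pi * (cc p.2 ^ 2 * (k ^ 2) ^ p.2) : ℝ) : ℂ) else 0 := by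
    intro p
    have : ∀ t, ((cc p.1 : ℂ) * ww k t ^ p.1) * star ((cc p.2 : ℂ) * ww k t ^ p.2) =
      ((cc p.1 : ℂ) * cc p.2) * (ww k t ^ p.1 * star (ww k t ^ p.2)) := by
      intro t
      have : star (cc p.2 : ℂ) = cc p.2 := by
        rw [← starRingEnd_apply, Complex.conj_ofReal]
      rw [star_mul, this]; ring
    simp_rw [this]
    rw [intervalIntegral.integral_const_mul, ww_int]
    split_ifs with h
    · rw [h]; push_cast; ring
    · simp
  simp_rw [e] at key
  rw [intervalIntegral.integral_ofReal] at key
  have inj : Function.Injective (fun n : ℕ => (n, n)) := fun a b h => by simpa using h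
  rw [← inj.hasSum_iff] at key
  · rw [← Complex.hasSum_ofReal]
    refine Eq.mp (congrArg (fun g => HasSum g _) ?_) key
    funext n; simp
  · rintro ⟨a, b⟩ h
    have : a ≠ b := by rintro rfl; exact h ⟨a, rfl⟩
    simp [this]

lemma ww_norm1 (k t : ℝ) : ‖1 - ww k t‖ ^ 2 = (1 + k) ^ 2 - 4 * k * Real.sin t ^ 2 := by
  have : ww k t = ((-k * Real.cos (2 * t) : ℝ) : ℂ) + ((-k * Real.sin (2 * t) : ℝ) : ℂ) * Complex.I := by
    unfold ww
    rw [show (2 * Complex.I * t : ℂ) = ((2 * t : ℝ) : ℂ) * Complex.I by push_cast; ring,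
      Complex.exp_mul_I, ← Complex.ofReal_cos, ← Complex.ofReal_sin]
    push_cast; ring
  rw [this, ← Complex.normSq_eq_norm_sq, Complex.normSq_apply]
  simp only [Complex.sub_re, Complex.sub_im, Complex.add_re, Complex.add_im, Complex.one_re,
    Complex.one_im, Complex.ofReal_re, Complex.ofReal_im, Complex.mul_re, Complex.mul_im,
    Complex.I_re, Complex.I_im]
  have h1 := Real.sin_sq_add_cos_sq (2 * t)
  have h2 := Real.cos_two_mul t
  have h3 := Real.sin_sq_add_cos_sq t
  linear_combination k^2 * h1 + 2 * k * h2 + 4 * k * h3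

lemma part2 (k : ℝ) (h0 : 0 ≤ k) (h1 : k < 1) :
    HasSum (fun n => Real.pi * (cc n ^ 2 * (4 * k / (1 + k) ^ 2) ^ n))
      ((1 + k) * ∫ t in (0:ℝ)..Real.pi, ‖1 - ww k t‖⁻¹) := by
  set m := 4 * k / (1 + k) ^ 2 with hm
  have hm0 : 0 ≤ m := by positivity
  have hm1 : m < 1 := by
    rw [hm, div_lt_one (by positivity)]; nlinarith [sq_pos_of_pos (sub_pos.2 h1)]
  have hs : ∀ t, 0 ≤ m * Real.sin t ^ 2 ∧ m * Real.sin t ^ 2 ≤ m := fun t =>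
    ⟨by positivity, mul_le_of_le_one_right hm0 (Real.sin_sq_le_one t)⟩
  have hn : ∀ t, (1 + k) * ‖1 - ww k t‖⁻¹ = (√(1 - m * Real.sin t ^ 2))⁻¹ := by
    intro t
    have : 1 - m * Real.sin t ^ 2 = (‖1 - ww k t‖ / (1 + k)) ^ 2 := by
      rw [div_pow, ww_norm1, hm]; field_simp
    rw [this, Real.sqrt_sq (by positivity), inv_div]; rfl
  rw [← intervalIntegral.integral_const_mul]
  simp_rw [hn]
  have key := hasSum_ii (a := 0) (b := Real.pi)
    (F := fun (n : ℕ) t => cc n * (m * Real.sin t ^ 2) ^ n)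
    (f := fun t => (√(1 - m * Real.sin t ^ 2))⁻¹) (fun n => m ^ n)
    (summable_geometric_of_lt_one hm0 hm1)
    (fun n => by fun_prop)
    (fun n t => by
      have := cc_pos n
      have hp := (hs t).1
      rw [Real.norm_of_nonneg (by positivity)]
      calc _ ≤ 1 * m ^ n := by
            gcongr
            · exact cc_le_one n
            · exact (hs t).2
        _ = _ := one_mul _)
    (fun t => cc_real _ (hs t).1 ((hs t).2.trans_lt hm1))
  refine Eq.mp (congrArg (fun g => HasSum g _) ?_) key
  funext n
  have : ∀ t, cc n * (m * Real.sin t ^ 2) ^ n = cc n * m ^ n * Real.sin t ^ (2 * n) := by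
    intro t; rw [mul_pow, ← pow_mul]; ring
  simp_rw [this]
  rw [intervalIntegral.integral_const_mul, integral_sin_pow_even, ← cc]
  ring

lemma landen (k : ℝ) (h0 : 0 ≤ k) (h1 : k < 1) :
    hyp2F1 (1/2) (1/2) 1 (4 * k / (1 + k) ^ 2) = (1 + k) * hyp2F1 (1/2) (1/2) 1 (k ^ 2) := by
  have e1 := (part1 k h0 h1).tsum_eq
  have e2 := (part2 k h0 h1).tsum_eq
  rw [← e1, tsum_mul_left, tsum_mul_left] at e2
  rw [hyp_eq, hyp_eq]
  have := Real.pi_ne_zero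
  apply mul_left_cancel₀ this
  rw [e2]; ring

open Filter Topology in
lemma hyp_tendsto (u : ℕ → ℝ) (hu : Tendsto u atTop (𝓝 0)) :
    Tendsto (fun n => hyp2F1 (1/2) (1/2) 1 (u n)) atTop (𝓝 1) := by
  simp_rw [hyp_eq]
  have h1 : (∑' n, cc n ^ 2 * (0:ℝ) ^ n) = 1 := by
    rw [tsum_eq_single 0]
    · simp [cc_zero]
    · intro n hn; simp [hn]
  rw [← h1]
  apply tendsto_tsum_of_dominated_convergence (bound := fun n => (1/2:ℝ)^n)
  · exact summable_geometric_of_lt_one (by norm_num) (by norm_num)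
  · intro n; exact (hu.pow n).const_mul _
  · have : ∀ᶠ n in atTop, |u n| < 1/2 := by
      have := hu.abs
      rw [abs_zero] at this
      exact this.eventually_lt_const (by norm_num)
    filter_upwards [this] with n hn i
    rw [norm_mul, norm_pow, norm_pow, Real.norm_of_nonneg (cc_pos _).le, Real.norm_eq_abs]
    have := cc_pos i
    calc _ ≤ 1 ^ 2 * (1/2:ℝ) ^ i := by
          gcongr
          exact cc_le_one i
      _ = _ := by simp

/-- Common generalisation. -/
noncomputable def th (s q : ℝ) : ℝ := ∑' k : ℤ, q ^ (((k : ℝ) + s)^2)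

lemma theta3_eq (q : ℝ) : theta3 q = th 0 q := by
  unfold theta3 th
  congr 1; ext k
  rw [← Real.rpow_intCast]; push_cast; simp

lemma theta2_eq (q : ℝ) : theta2 q = th (1/2) q := rfl

lemma th_summable (s q : ℝ) (h0 : 0 < q) (h1 : q < 1) :
    Summable fun k : ℤ => q ^ (((k : ℝ) + s)^2) := by
  have hg := summable_geometric_of_lt_one h0.le h1
  have key : Summable fun k : ℤ => q ^ (|(k:ℝ)|) := by
    apply Summable.of_nat_of_neg
    · refine hg.congr fun n => ?_
      simp
    · refine hg.congr fun n => ?_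
      simp
  refine Summable.of_nonneg_of_le (fun k => by positivity) (fun k => ?_)
    (key.mul_left (q ^ (-(1/4 + |s|))))
  rw [← Real.rpow_add h0]
  apply Real.rpow_le_rpow_of_exponent_ge h0 h1.le
  have : |(k:ℝ)| ≤ |(k:ℝ) + s| + |s| := by
    have := abs_sub ((k:ℝ) + s) s
    simpa using this
  have h2 : ((k:ℝ) + s)^2 = |(k:ℝ) + s| ^ 2 := (sq_abs _).symm
  nlinarith [sq_nonneg (|(k:ℝ) + s| - 1/2)]

lemma th_mul (s r q : ℝ) (h0 : 0 < q) (h1 : q < 1) :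
    HasSum (fun p : ℤ × ℤ => q ^ (((p.1:ℝ) + s)^2 + ((p.2:ℝ) + r)^2)) (th s q * th r q) := by
  have s1 := (th_summable s q h0 h1).norm
  have s2 := (th_summable r q h0 h1).norm
  have a := summable_mul_of_summable_norm s1 s2
  have b := tsum_mul_tsum_of_summable_norm s1 s2
  unfold th
  rw [b]
  simp_rw [Real.rpow_add h0]
  exact a.hasSum

/-- parity decomposition -/
def par : (ℤ × ℤ) ⊕ (ℤ × ℤ) → ℤ × ℤ
  | .inl (a, b) => (a + b, b - a)
  | .inr (a, b) => (a + b + 1, b - a)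

lemma par_bij : Function.Bijective par := by
  constructor
  · rintro (⟨a, b⟩ | ⟨a, b⟩) (⟨c, d⟩ | ⟨c, d⟩) h <;> simp only [par, Prod.mk.injEq] at h
    · obtain ⟨h, h'⟩ := h
      have : a = c := by omega
      have : b = d := by omega
      simp [*]
    · omega
    · omega
    · obtain ⟨h, h'⟩ := h
      have : a = c := by omega
      have : b = d := by omega
      simp [*]
  · rintro ⟨m, n⟩
    rcases Int.even_or_odd (m + n) with ⟨r, h⟩ | ⟨r, h⟩
    · exact ⟨.inl (m - r, r), by simp only [par, Prod.mk.injEq]; omega⟩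
    · exact ⟨.inr (m - r - 1, r), by simp only [par, Prod.mk.injEq]; omega⟩

lemma sq_pow (q e : ℝ) (h0 : 0 < q) : (q ^ 2) ^ e = q ^ (2 * e) := by
  rw [← Real.rpow_natCast, ← Real.rpow_mul h0.le]; norm_num

lemma th_split (s q : ℝ) (h0 : 0 < q) (h1 : q < 1) :
    th s q ^ 2 = th 0 (q^2) * th s (q^2) + th (1/2) (q^2) * th (s + 1/2) (q^2) := by
  have h0' : 0 < q ^ 2 := by positivity
  have h1' : q ^ 2 < 1 := by nlinarith
  have A := th_mul s s q h0 h1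
  have B := th_mul 0 s (q^2) h0' h1'
  have C := th_mul (1/2) (s+1/2) (q^2) h0' h1'
  rw [← (Equiv.ofBijective _ par_bij).hasSum_iff] at A
  have D : HasSum ((fun p : ℤ × ℤ => q ^ (((p.1:ℝ) + s)^2 + ((p.2:ℝ) + s)^2)) ∘
      (Equiv.ofBijective _ par_bij)) (th 0 (q^2) * th s (q^2) + th (1/2) (q^2) * th (s + 1/2) (q^2)) := by
    apply HasSum.sum
    · convert B using 1
      ext ⟨a, b⟩
      simp only [Function.comp, Equiv.ofBijective_apply, par]
      rw [sq_pow _ _ h0]; push_cast; congr 1; ring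
    · convert C using 1
      ext ⟨a, b⟩
      simp only [Function.comp, Equiv.ofBijective_apply, par]
      rw [sq_pow _ _ h0]; push_cast; congr 1; ring
  rw [sq]
  exact A.unique D

lemma th_one (q : ℝ) : th (1/2 + 1/2) q = th 0 q := by
  unfold th
  rw [← (Equiv.addRight (1:ℤ)).tsum_eq (fun k : ℤ => q ^ (((k : ℝ) + 0)^2))]
  congr 1; ext k
  simp only [Equiv.coe_addRight]; push_cast; congr 1; ring

lemma th3_rec (q : ℝ) (h0 : 0 < q) (h1 : q < 1) :
    theta3 q ^ 2 = theta3 (q^2) ^ 2 + theta2 (q^2) ^ 2 := by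
  simp only [theta3_eq, theta2_eq]
  rw [th_split 0 q h0 h1, zero_add]; ring

lemma th2_rec (q : ℝ) (h0 : 0 < q) (h1 : q < 1) :
    theta2 q ^ 2 = 2 * (theta2 (q^2) * theta3 (q^2)) := by
  simp only [theta3_eq, theta2_eq]
  rw [th_split (1/2) q h0 h1, th_one]; ring

lemma th_pos (s q : ℝ) (h0 : 0 < q) (h1 : q < 1) : 0 < th s q :=
  (th_summable s q h0 h1).tsum_pos (fun k => by positivity) 0 (by positivity)

open Filter Topology

lemma q_tendsto (q : ℝ) (h0 : 0 < q) (h1 : q < 1) :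
    Tendsto (fun n : ℕ => q ^ (2 ^ n)) atTop (𝓝 0) :=
  (tendsto_pow_atTop_nhds_zero_of_lt_one h0.le h1).comp
    (tendsto_pow_atTop_atTop_of_one_lt (by norm_num))

lemma th_tendsto (s q : ℝ) (h0 : 0 < q) (h1 : q < 1) :
    Tendsto (fun n : ℕ => th s (q ^ (2 ^ n))) atTop (𝓝 (∑' k : ℤ, (0:ℝ) ^ (((k : ℝ) + s)^2))) := by
  apply tendsto_tsum_of_dominated_convergence (th_summable s q h0 h1)
  · intro k
    exact (q_tendsto q h0 h1).rpow_const (Or.inr (sq_nonneg _))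
  · refine .of_forall fun n k => ?_
    rw [Real.norm_of_nonneg (by positivity)]
    apply Real.rpow_le_rpow (by positivity) _ (sq_nonneg _)
    exact pow_le_of_le_one h0.le h1.le (by positivity)

lemma th3_tendsto (q : ℝ) (h0 : 0 < q) (h1 : q < 1) :
    Tendsto (fun n : ℕ => theta3 (q ^ (2 ^ n))) atTop (𝓝 1) := by
  simp_rw [theta3_eq]
  convert th_tendsto 0 q h0 h1
  rw [tsum_eq_single 0]
  · simp
  · intro k hk
    apply Real.zero_rpow
    simpa using hk

lemma th2_tendsto (q : ℝ) (h0 : 0 < q) (h1 : q < 1) :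
    Tendsto (fun n : ℕ => theta2 (q ^ (2 ^ n))) atTop (𝓝 0) := by
  simp_rw [theta2_eq]
  convert th_tendsto (1/2) q h0 h1
  symm
  refine (tsum_congr fun k => ?_).trans tsum_zero
  apply Real.zero_rpow
  apply pow_ne_zero
  intro h
  have : (2 * k + 1 : ℤ) = 0 := by
    have : (2 * k + 1 : ℝ) = 0 := by linarith
    exact_mod_cast this
  omega

/-- elliptic modulus -/
noncomputable def kk (q : ℝ) : ℝ := theta2 q ^ 2 / theta3 q ^ 2

lemma kk_tendsto (q : ℝ) (h0 : 0 < q) (h1 : q < 1) :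
    Tendsto (fun n : ℕ => kk (q ^ (2 ^ n))) atTop (𝓝 0) := by
  have := ((th2_tendsto q h0 h1).pow 2).div ((th3_tendsto q h0 h1).pow 2) (by norm_num)
  simpa [kk, Pi.div_def] using this

lemma kk_rec (q : ℝ) (h0 : 0 < q) (h1 : q < 1) :
    kk q ^ 2 = 4 * kk (q^2) / (1 + kk (q^2)) ^ 2 := by
  have h0' : 0 < q ^ 2 := by positivity
  have h1' : q ^ 2 < 1 := by nlinarith
  have a := th_pos 0 _ h0' h1'
  rw [← theta3_eq] at a
  have b := th_pos (1/2) _ h0' h1'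
  rw [← theta2_eq] at b
  unfold kk
  rw [th3_rec q h0 h1, th2_rec q h0 h1]
  field_simp
  ring

lemma kk_nonneg (q : ℝ) : 0 ≤ kk q := by unfold kk; positivity

lemma kk_one (q : ℝ) (h0 : 0 < q) (h1 : q < 1) (h : 1 ≤ kk q) : 1 ≤ kk (q ^ 2) := by
  have e := kk_rec q h0 h1
  have := kk_nonneg (q^2)
  rw [eq_div_iff (by positivity)] at e
  have h2 : 1 ≤ kk q ^ 2 := by nlinarith
  have : (kk (q^2) - 1) ^ 2 ≤ 0 := by nlinarith [sq_nonneg (1 + kk (q^2))]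
  have : kk (q^2) - 1 = 0 := by
    apply pow_eq_zero_iff (two_ne_zero) |>.1
    exact le_antisymm this (sq_nonneg _)
  linarith

lemma pow_mem (q : ℝ) (h0 : 0 < q) (h1 : q < 1) (n : ℕ) : 0 < q ^ (2^n) ∧ q ^ (2^n) < 1 :=
  ⟨by positivity, pow_lt_one₀ h0.le h1 (by positivity)⟩

lemma kk_lt_one (q : ℝ) (h0 : 0 < q) (h1 : q < 1) : kk q < 1 := by
  by_contra! h
  have : ∀ n : ℕ, 1 ≤ kk (q ^ (2 ^ n)) := by
    intro n
    induction n with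
    | zero => simpa using h
    | succ n ih =>
      obtain ⟨a, b⟩ := pow_mem q h0 h1 n
      rw [pow_succ, pow_mul]
      exact kk_one _ a b ih
  have := ge_of_tendsto' (kk_tendsto q h0 h1) this
  linarith

lemma quot_rec (q : ℝ) (h0 : 0 < q) (h1 : q < 1) :
    hyp2F1 (1/2) (1/2) 1 (kk q ^ 2) / theta3 q ^ 2 =
    hyp2F1 (1/2) (1/2) 1 (kk (q^2) ^ 2) / theta3 (q^2) ^ 2 := by
  have h0' : 0 < q ^ 2 := by positivity
  have h1' : q ^ 2 < 1 := by nlinarith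
  have a := th_pos 0 _ h0' h1'
  rw [← theta3_eq] at a
  have e : theta3 q ^ 2 = (1 + kk (q^2)) * theta3 (q^2) ^ 2 := by
    rw [th3_rec q h0 h1, kk]; field_simp
  have := kk_nonneg (q^2)
  rw [kk_rec q h0 h1, landen _ (kk_nonneg _) (kk_lt_one _ h0' h1'), e,
    mul_div_mul_left _ _ (by positivity)]

lemma quot_one (q : ℝ) (h0 : 0 < q) (h1 : q < 1) :
    hyp2F1 (1/2) (1/2) 1 (kk q ^ 2) / theta3 q ^ 2 = 1 := by
  have : ∀ n : ℕ, hyp2F1 (1/2) (1/2) 1 (kk (q ^ (2^n)) ^ 2) / theta3 (q ^ (2^n)) ^ 2 =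
      hyp2F1 (1/2) (1/2) 1 (kk q ^ 2) / theta3 q ^ 2 := by
    intro n
    induction n with
    | zero => simp
    | succ n ih =>
      obtain ⟨a, b⟩ := pow_mem q h0 h1 n
      rw [pow_succ 2 n, pow_mul, ← ih, quot_rec _ a b]
  have t := (hyp_tendsto (fun n => kk (q ^ (2^n)) ^ 2)
    (by simpa using (kk_tendsto q h0 h1).pow 2)).div ((th3_tendsto q h0 h1).pow 2) (by norm_num)
  simp only [Pi.div_def, this] at t
  have := tendsto_nhds_unique t tendsto_const_nhds
  rw [← this]; norm_num

end RamAux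

theorem ramanujan_identity (q : ℝ) (hq : q ∈ Set.Ioo (0:ℝ) 1) :
    hyp2F1 (1/2) (1/2) 1 ((theta2 q ^ 2 / theta3 q ^ 2) ^ 2) = theta3 q ^ 2 := by
  have a := RamAux.th_pos 0 q hq.1 hq.2
  rw [← RamAux.theta3_eq] at a
  have h := RamAux.quot_one q hq.1 hq.2
  rw [div_eq_one_iff_eq (by positivity)] at h
  exact h
end

section
/- ₂F₁(1/2, 1/2; 1; 1/2) = √π · Γ(1) / Γ(3/4)² = Γ(1/4) / (√2 · Γ(1/2) Γ(3/4)), and hence √2 · ₂F₁(1/2, 1/2; 1; 1/2) = Γ(1/4) / (Γ(1/2) Γ(3/4)) = 2 θ₄(e^{-π})². -/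
open MeasureTheory Filter Topology Set in
theorem sum3 {q : ℝ} (h0 : 0 < q) (h1 : q < 1) : Summable (fun k : ℤ => q ^ (k^2)) := by
  have key : Summable (fun n : ℕ => q ^ (((n:ℤ))^2)) := by
    refine Summable.of_nonneg_of_le (fun n => by positivity) (fun n => ?_)
      (summable_geometric_of_lt_one h0.le h1)
    have : q ^ (((n:ℤ))^2) = q ^ (n^2) := by exact_mod_cast zpow_natCast q (n^2)
    rw [this]
    exact pow_le_pow_of_le_one h0.le h1.le (Nat.le_self_pow (by norm_num) n)
  refine Summable.of_nat_of_neg key ?_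
  simpa using key

theorem abs_neg_one_zpow' (k : ℤ) : |(-1 : ℝ) ^ k| = 1 := by
  rw [abs_zpow]; simp

theorem sum4 {q : ℝ} (h0 : 0 < q) (h1 : q < 1) :
    Summable (fun k : ℤ => (-1:ℝ)^k * q ^ (k^2)) := by
  refine Summable.of_norm_bounded (sum3 h0 h1) (fun k => ?_)
  rw [norm_mul, Real.norm_eq_abs, abs_neg_one_zpow', one_mul, Real.norm_of_nonneg (by positivity)]

theorem theta3_ge_one {q : ℝ} (h0 : 0 < q) (h1 : q < 1) : 1 ≤ theta3 q := by
  have := (sum3 h0 h1).le_tsum 0 (fun k _ => by positivity)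
  simpa [theta3] using this

/-- Reindexing of a double sum supported on pairs of equal parity. -/
theorem tsum_parity (f : ℤ × ℤ → ℝ) (hf : ∀ p, Odd (p.1 + p.2) → f p = 0) :
    ∑' p, f p = ∑' p : ℤ × ℤ, f (p.1 + p.2, p.1 - p.2) := by
  have hinj : Function.Injective (fun p : ℤ × ℤ => (p.1 + p.2, p.1 - p.2)) := by
    rintro ⟨a, b⟩ ⟨c, d⟩ h
    simp only [Prod.mk.injEq] at h ⊢
    omega
  refine (hinj.tsum_eq ?_).symm
  intro p hp
  have : ¬ Odd (p.1 + p.2) := fun h => hp (hf p h)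
  rw [Int.not_odd_iff_even] at this
  obtain ⟨r, hr⟩ := this
  refine ⟨(r, r - p.2), ?_⟩
  ext <;> simp; omega

theorem qpow (q : ℝ) (h0 : 0 < q) (u v : ℤ) :
    q ^ ((u+v)^2) * q ^ ((u-v)^2) = (q^2) ^ (u^2) * (q^2)^(v^2) := by
  have : (q^2 : ℝ) = q ^ (2:ℤ) := by norm_cast
  rw [this, ← zpow_mul, ← zpow_mul, ← zpow_add₀ h0.ne', ← zpow_add₀ h0.ne']
  congr 1; ring

theorem neg_one_zpow_add_sub (u v : ℤ) : (-1:ℝ)^(u+v) * (-1)^(u-v) = 1 := by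
  rw [← zpow_add₀ (by norm_num)]
  exact Even.neg_one_zpow ⟨u, by ring⟩

theorem theta_sum_sq {q : ℝ} (h0 : 0 < q) (h1 : q < 1) :
    theta3 q ^ 2 + theta4 q ^ 2 = 2 * theta3 (q^2) ^ 2 := by
  have h0' : 0 < q^2 := by positivity
  have h1' : q^2 < 1 := by nlinarith
  have s3 := (sum3 h0 h1)
  have s4 := (sum4 h0 h1)
  have s3' := (sum3 h0' h1')
  have e3 : theta3 q ^ 2 = ∑' p : ℤ × ℤ, q ^ (p.1^2) * q ^ (p.2^2) := by
    rw [sq, theta3, tsum_mul_tsum_of_summable_norm s3.norm s3.norm]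
  have e4 : theta4 q ^ 2 = ∑' p : ℤ × ℤ, ((-1)^p.1 * q ^ (p.1^2)) * ((-1)^p.2 * q ^ (p.2^2)) := by
    rw [sq, theta4, tsum_mul_tsum_of_summable_norm s4.norm s4.norm]
  have e3' : theta3 (q^2) ^ 2 = ∑' p : ℤ × ℤ, (q^2) ^ (p.1^2) * (q^2) ^ (p.2^2) := by
    rw [sq, theta3, tsum_mul_tsum_of_summable_norm s3'.norm s3'.norm]
  rw [e3, e4, e3', ← (summable_mul_of_summable_norm s3.norm s3.norm).tsum_add
    (summable_mul_of_summable_norm s4.norm s4.norm), tsum_parity, ← tsum_mul_left]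
  · refine tsum_congr fun p => ?_
    simp only
    rw [← qpow q h0, mul_mul_mul_comm ((-1:ℝ)^_), neg_one_zpow_add_sub]
    ring
  · rintro ⟨a, b⟩ h
    have : (-1:ℝ)^a * (-1)^b = -1 := by
      rw [← zpow_add₀ (by norm_num)]; exact Odd.neg_one_zpow h
    simp only
    rw [mul_mul_mul_comm ((-1:ℝ)^_), this]
    ring

theorem theta_prod {q : ℝ} (h0 : 0 < q) (h1 : q < 1) :
    theta3 q * theta4 q = theta4 (q^2) ^ 2 := by
  have h0' : 0 < q^2 := by positivity
  have h1' : q^2 < 1 := by nlinarith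
  have s3 := (sum3 h0 h1)
  have s4 := (sum4 h0 h1)
  have s4' := (sum4 h0' h1')
  have e1 : theta3 q * theta4 q = ∑' p : ℤ × ℤ, q ^ (p.1^2) * ((-1)^p.2 * q ^ (p.2^2)) := by
    rw [theta3, theta4, tsum_mul_tsum_of_summable_norm s3.norm s4.norm]
  have e2 : theta3 q * theta4 q = ∑' p : ℤ × ℤ, ((-1)^p.1 * q ^ (p.1^2)) * q ^ (p.2^2) := by
    rw [mul_comm, theta3, theta4, tsum_mul_tsum_of_summable_norm s4.norm s3.norm]
  have e4 : theta4 (q^2) ^ 2 =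
      ∑' p : ℤ × ℤ, ((-1)^p.1 * (q^2) ^ (p.1^2)) * ((-1)^p.2 * (q^2) ^ (p.2^2)) := by
    rw [sq, theta4, tsum_mul_tsum_of_summable_norm s4'.norm s4'.norm]
  have : theta3 q * theta4 q + theta3 q * theta4 q = 2 * theta4 (q^2) ^ 2 := by
    nth_rewrite 1 [e1]
    rw [e2, e4, ← (summable_mul_of_summable_norm s3.norm s4.norm).tsum_add
      (summable_mul_of_summable_norm s4.norm s3.norm), tsum_parity, ← tsum_mul_left]
    · refine tsum_congr fun p => ?_
      simp only
      have hm : (-1:ℝ)^(p.1 - p.2) = (-1)^(p.1+p.2) := by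
        have h2 := neg_one_zpow_add_sub p.1 p.2
        rcases neg_one_pow_eq_or ℝ (p.1+p.2).natAbs with _ | _ <;>
        rcases Int.even_or_odd (p.1+p.2) with h | h <;>
        · first
          | rw [h.neg_one_zpow] at h2 ⊢; linarith
      have ha : (-1:ℝ)^(p.1+p.2) = (-1)^p.1 * (-1)^p.2 := zpow_add₀ (by norm_num) _ _
      have := qpow q h0 p.1 p.2
      rw [hm, ha]
      linear_combination (2 * (-1:ℝ)^p.1 * (-1)^p.2) * this
    · rintro ⟨a, b⟩ h
      simp only
      have : (-1:ℝ)^a * (-1)^b = -1 := by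
        rw [← zpow_add₀ (by norm_num)]; exact Odd.neg_one_zpow h
      have : (-1:ℝ)^a + (-1)^b = 0 := by
        rcases Int.even_or_odd a with h | h <;>
        · rw [h.neg_one_zpow] at this ⊢; linarith
      linear_combination (q^(a^2) * q^(b^2)) * this
  linarith

open Filter Topology in
theorem pow_two_pow_mem {q : ℝ} (h0 : 0 < q) (h1 : q < 1) (n : ℕ) :
    0 < q ^ (2^n) ∧ q ^ (2^n) ≤ q ∧ q^(2^n) < 1 := by
  have : q ^ (2^n) ≤ q := pow_le_of_le_one h0.le h1.le (by positivity)
  exact ⟨by positivity, this, this.trans_lt h1⟩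

open Filter Topology in
theorem tendsto_term {q : ℝ} (h0 : 0 < q) (h1 : q < 1) (k : ℤ) :
    Tendsto (fun n : ℕ => (q^(2^n)) ^ (k^2)) atTop (𝓝 (if k = 0 then 1 else 0)) := by
  split_ifs with hk
  · subst hk; simp
  · have hq : Tendsto (fun n : ℕ => q^(2^n)) atTop (𝓝 0) :=
      (tendsto_pow_atTop_nhds_zero_of_lt_one h0.le h1).comp
        (tendsto_pow_atTop_atTop_of_one_lt (by norm_num))
    have hpos : 0 < k^2 := by positivity
    obtain ⟨m, hm⟩ := Int.eq_ofNat_of_zero_le hpos.le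
    have hm0 : m ≠ 0 := by rintro rfl; simp at hm; exact hk hm
    rw [hm]
    simp only [zpow_natCast]
    simpa [hm0] using hq.pow m

theorem term_bound {q : ℝ} (h0 : 0 < q) (h1 : q < 1) (n : ℕ) (k : ℤ) :
    (q^(2^n)) ^ (k^2) ≤ q ^ (k^2) := by
  obtain ⟨a, b, _⟩ := pow_two_pow_mem h0 h1 n
  exact zpow_le_zpow_left₀ (by positivity) a.le b

open Filter Topology in
theorem tendsto_theta3 {q : ℝ} (h0 : 0 < q) (h1 : q < 1) :
    Tendsto (fun n : ℕ => theta3 (q^(2^n))) atTop (𝓝 1) := by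
  have := tendsto_tsum_of_dominated_convergence (𝓕 := atTop)
    (f := fun (n : ℕ) (k : ℤ) => (q^(2^n)) ^ (k^2)) (sum3 h0 h1) (tendsto_term h0 h1)
    (Eventually.of_forall fun n k => by
      have := (pow_two_pow_mem h0 h1 n).1
      rw [Real.norm_of_nonneg (by positivity)]; exact term_bound h0 h1 n k)
  simpa [theta3] using this

open Filter Topology in
theorem tendsto_theta4 {q : ℝ} (h0 : 0 < q) (h1 : q < 1) :
    Tendsto (fun n : ℕ => theta4 (q^(2^n))) atTop (𝓝 1) := by
  have := tendsto_tsum_of_dominated_convergence (𝓕 := atTop)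
    (f := fun (n : ℕ) (k : ℤ) => (-1:ℝ)^k * (q^(2^n)) ^ (k^2)) (sum3 h0 h1)
    (fun k => (tendsto_term h0 h1 k).const_mul ((-1:ℝ)^k))
    (Eventually.of_forall fun n k => by
      have := (pow_two_pow_mem h0 h1 n).1
      rw [norm_mul, Real.norm_eq_abs, abs_neg_one_zpow', one_mul,
        Real.norm_of_nonneg (by positivity)]; exact term_bound h0 h1 n k)
  simpa [theta4] using this

open Filter Topology in
theorem theta4_ne_zero {q : ℝ} (h0 : 0 < q) (h1 : q < 1) : theta4 q ≠ 0 := by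
  intro h
  have hz : ∀ n : ℕ, theta4 (q^(2^n)) = 0 := by
    intro n
    induction n with
    | zero => simpa using h
    | succ n ih =>
      obtain ⟨a, _, b⟩ := pow_two_pow_mem h0 h1 n
      have := theta_prod a b
      rw [ih, mul_zero, ← pow_mul, ← pow_succ] at this
      exact pow_eq_zero_iff (two_ne_zero) |>.1 this.symm
  have := tendsto_theta4 h0 h1
  simp only [hz] at this
  exact zero_ne_one (tendsto_nhds_unique tendsto_const_nhds this)

theorem theta3_exp (a : ℝ) : theta3 (Real.exp (-Real.pi * a)) =
    ∑' n : ℤ, Real.exp (-Real.pi * a * (n : ℝ) ^ 2) := by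
  refine tsum_congr fun k => ?_
  rw [← Real.rpow_intCast, ← Real.exp_mul]; congr 1; push_cast; ring

/-- At `q = exp(-π)`: `θ₃⁴ = 2 θ₄⁴`. -/
theorem theta_special :
    theta3 (Real.exp (-Real.pi)) ^ 2 = Real.sqrt 2 * theta4 (Real.exp (-Real.pi)) ^ 2 := by
  set q := Real.exp (-Real.pi) with hq
  have h0 : 0 < q := Real.exp_pos _
  have h1 : q < 1 := by rw [hq, Real.exp_lt_one_iff]; linarith [Real.pi_pos]
  set p := Real.exp (-Real.pi * (1/2)) with hp
  have p0 : 0 < p := Real.exp_pos _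
  have p1 : p < 1 := by rw [hp, Real.exp_lt_one_iff]; linarith [Real.pi_pos]
  have hpq : p ^ 2 = q := by rw [hp, hq, ← Real.exp_nat_mul]; congr 1; push_cast; ring
  have hq2 : q ^ 2 = Real.exp (-Real.pi * 2) := by
    rw [hq, ← Real.exp_nat_mul]; congr 1; push_cast; ring
  have F : theta3 (q^2) ^ 2 = 1/2 * theta3 p ^ 2 := by
    rw [hq2, theta3_exp, Real.tsum_exp_neg_mul_int_sq two_pos, hp, theta3_exp, mul_pow,
      ← Real.sqrt_eq_rpow, div_pow, Real.sq_sqrt (by norm_num)]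
    congr 2
    · norm_num
    · refine tsum_congr fun k => ?_
      congr 1; ring
  have A := theta_sum_sq h0 h1
  have B := theta_sum_sq p0 p1
  have C := theta_prod p0 p1
  rw [hpq] at B C
  have C2 : theta3 p ^ 2 * theta4 p ^ 2 = (theta4 q ^ 2)^2 := by rw [← mul_pow, C]
  have e1 : theta3 p ^ 2 = theta3 q ^ 2 + theta4 q ^ 2 := by linarith
  have e2 : theta4 p ^ 2 = theta3 q ^ 2 - theta4 q ^ 2 := by linarith
  rw [e1, e2] at C2
  have h2 : Real.sqrt 2 ^ 2 = 2 := Real.sq_sqrt (by norm_num)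
  have : (theta3 q ^ 2) ^ 2 = (Real.sqrt 2 * theta4 q ^ 2) ^ 2 := by
    rw [mul_pow, h2]; linarith
  exact (pow_left_inj₀ (by positivity) (by positivity) two_ne_zero).1 this

/-- The complete elliptic integral in Gauss' form, over the real line. -/
noncomputable def ellK (a b : ℝ) : ℝ := ∫ t : ℝ, 1 / Real.sqrt ((t^2 + a^2) * (t^2 + b^2))

theorem ellK_half (a b : ℝ) :
    ellK a b = 2 * ∫ t in Set.Ioi (0:ℝ), 1 / Real.sqrt ((t^2 + a^2) * (t^2 + b^2)) := by
  rw [ellK, ← integral_comp_abs (f := fun t => 1 / Real.sqrt ((t^2 + a^2) * (t^2 + b^2)))]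
  simp

/-- Gauss' invariance of the elliptic integral under the AGM step. -/
theorem ellK_agm {a b c : ℝ} (ha : 0 < a) (hb : 0 < b) (hc : c^2 = a * b) :
    ellK ((a+b)/2) c = ellK a b := by
  have hab : 0 < a * b := mul_pos ha hb
  rw [ellK_half a b, ellK]
  have himg : (fun t : ℝ => (t - a*b/t)/2) '' Set.Ioi 0 = Set.univ := by
    refine Set.eq_univ_of_forall fun u => ?_
    have h1 : 0 < u^2 + a*b := by positivity
    have h2 : Real.sqrt (u^2+a*b) ^ 2 = u^2 + a*b := Real.sq_sqrt h1.le
    have h3 : |u| < Real.sqrt (u^2+a*b) := by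
      rw [← Real.sqrt_sq_eq_abs]; exact Real.sqrt_lt_sqrt (sq_nonneg u) (by linarith)
    have h4 : 0 < u + Real.sqrt (u^2+a*b) := by linarith [neg_abs_le u]
    refine ⟨u + Real.sqrt (u^2+a*b), h4, ?_⟩
    simp only
    field_simp
    nlinarith
  have hinj : Set.InjOn (fun t : ℝ => (t - a*b/t)/2) (Set.Ioi 0) := by
    intro x hx y hy h
    simp only [Set.mem_Ioi] at hx hy
    simp only at h
    have h' : x - a*b/x = y - a*b/y := by linarith
    have h2 : (x - y) * (x*y + a*b) = 0 := by
      field_simp at h'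
      linear_combination h'
    have h3 : x*y + a*b ≠ 0 := by positivity
    rcases mul_eq_zero.1 h2 with h | h
    · linarith
    · exact absurd h h3
  have hder : ∀ x ∈ Set.Ioi (0:ℝ), HasDerivWithinAt (fun t : ℝ => (t - a*b/t)/2)
      ((1 + a*b/x^2)/2) (Set.Ioi 0) x := by
    intro x hx
    have hx0 : x ≠ 0 := ne_of_gt hx
    have := ((hasDerivAt_id x).sub ((hasDerivAt_inv hx0).const_mul (a*b))).div_const 2
    refine (HasDerivAt.hasDerivWithinAt ?_)
    have e : (1 + a*b/x^2)/2 = (1 - a * b * -(x ^ 2)⁻¹) / 2 := by ring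
    rw [e]
    exact this
  have := MeasureTheory.integral_image_eq_integral_abs_deriv_smul measurableSet_Ioi hder hinj
    (fun t => 1 / Real.sqrt ((t^2 + ((a+b)/2)^2) * (t^2 + c^2)))
  rw [himg, MeasureTheory.setIntegral_univ] at this
  rw [this, ← MeasureTheory.integral_const_mul]
  refine MeasureTheory.setIntegral_congr_fun measurableSet_Ioi fun t ht => ?_
  have ht : 0 < t := ht
  have e1 : ((t - a*b/t)/2)^2 + ((a+b)/2)^2 = (t^2+a^2)*(t^2+b^2) / (2*t)^2 := by
    field_simp; ring
  have e2 : ((t - a*b/t)/2)^2 + c^2 = ((t^2+a*b)/(2*t))^2 := by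
    rw [hc]; field_simp; ring
  rw [e1, e2, Real.sqrt_mul (by positivity), Real.sqrt_div (by positivity),
    Real.sqrt_sq (by positivity), Real.sqrt_sq (by positivity), abs_of_pos (by positivity),
    smul_eq_mul]
  have : 0 < Real.sqrt ((t^2+a^2)*(t^2+b^2)) := Real.sqrt_pos.2 (by positivity)
  field_simp

open Filter Topology in
theorem tendsto_ellK {a b : ℕ → ℝ} (ha : Tendsto a atTop (𝓝 1)) (hb : Tendsto b atTop (𝓝 1)) :
    Tendsto (fun n => ellK (a n) (b n)) atTop (𝓝 Real.pi) := by
  have hpi : Real.pi = ∫ t : ℝ, 1 / Real.sqrt ((t^2 + 1^2) * (t^2 + 1^2)) := by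
    rw [← integral_univ_inv_one_add_sq]
    congr 1; ext t
    rw [Real.sqrt_mul_self (by positivity)]
    simp [add_comm]
  rw [hpi]
  refine MeasureTheory.tendsto_integral_filter_of_dominated_convergence
    (fun t => 4 * (1 + t^2)⁻¹) (Eventually.of_forall fun n => ?_) ?_ ?_ ?_
  · exact Measurable.aestronglyMeasurable (by fun_prop)
  · filter_upwards [ha.eventually (lt_mem_nhds (show (1/2:ℝ) < 1 by norm_num)),
      hb.eventually (lt_mem_nhds (show (1/2:ℝ) < 1 by norm_num))] with n h1 h2
    refine Eventually.of_forall fun t => ?_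
    rw [Real.norm_of_nonneg (by positivity), ← div_eq_mul_inv,
      div_le_div_iff₀ (Real.sqrt_pos.2 (by positivity)) (by positivity), one_mul]
    have : (1 + t^2)/4 ≤ Real.sqrt ((t^2 + a n^2) * (t^2 + b n^2)) := by
      apply Real.le_sqrt_of_sq_le
      rw [sq]
      apply mul_le_mul <;> nlinarith [sq_nonneg t]
    linarith
  · exact integrable_inv_one_add_sq.const_mul 4
  · refine Eventually.of_forall fun t => ?_
    have h : Tendsto (fun n => (t^2 + a n^2) * (t^2 + b n^2)) atTop
        (𝓝 ((t^2 + 1^2) * (t^2 + 1^2))) :=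
      ((ha.pow 2).const_add _).mul ((hb.pow 2).const_add _)
    exact tendsto_const_nhds.div ((Real.continuous_sqrt.tendsto _).comp h)
      (Real.sqrt_pos.2 (by positivity)).ne'

open Filter Topology in
theorem ellK_theta {q : ℝ} (h0 : 0 < q) (h1 : q < 1) :
    ellK (theta3 q ^ 2) (theta4 q ^ 2) = Real.pi := by
  have hc : ∀ n : ℕ, ellK (theta3 (q^(2^n)) ^ 2) (theta4 (q^(2^n)) ^ 2) =
      ellK (theta3 q ^ 2) (theta4 q ^ 2) := by
    intro n
    induction n with
    | zero => simp
    | succ n ih =>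
      obtain ⟨a, _, b⟩ := pow_two_pow_mem h0 h1 n
      rw [← ih]
      have h3 := theta3_ge_one a b
      have h4 := theta4_ne_zero a b
      have hp : q^(2^(n+1)) = (q^(2^n))^2 := by rw [← pow_mul, ← pow_succ]
      rw [hp, ← ellK_agm (a := theta3 (q^(2^n)) ^ 2) (b := theta4 (q^(2^n)) ^ 2)
        (c := theta4 ((q^(2^n))^2) ^ 2) (by positivity) (by positivity), theta_sum_sq a b,
        mul_div_cancel_left₀ _ (two_ne_zero)]
      rw [← theta_prod a b, mul_pow]
  have h := tendsto_ellK (by simpa using (tendsto_theta3 h0 h1).pow 2)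
    (by simpa using (tendsto_theta4 h0 h1).pow 2)
  simp only [hc] at h
  exact tendsto_nhds_unique tendsto_const_nhds h

theorem ellK_scale {r : ℝ} (hr : 0 < r) (a b : ℝ) : ellK (a * r) (b * r) = ellK a b / r := by
  have := MeasureTheory.Measure.integral_comp_mul_left
    (fun t : ℝ => 1 / Real.sqrt ((t^2 + (a*r)^2) * (t^2 + (b*r)^2))) r
  have h2 : ∀ t : ℝ, 1 / Real.sqrt (((r*t)^2 + (a*r)^2) * ((r*t)^2 + (b*r)^2)) =
      (r^2)⁻¹ * (1 / Real.sqrt ((t^2 + a^2) * (t^2 + b^2))) := by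
    intro t
    have : ((r*t)^2 + (a*r)^2) * ((r*t)^2 + (b*r)^2) = (r^2)^2 * ((t^2 + a^2) * (t^2 + b^2)) := by
      ring
    rw [this, Real.sqrt_mul (by positivity), Real.sqrt_sq (by positivity)]
    simp [mul_comm]
  simp only [h2] at this
  rw [MeasureTheory.integral_const_mul, abs_of_pos (by positivity), smul_eq_mul] at this
  change (r^2)⁻¹ * ellK a b = r⁻¹ * ellK (a*r) (b*r) at this
  field_simp at this
  rw [eq_div_iff hr.ne', this]; ring

/-- The lemniscatic integral. -/
noncomputable def lem : ℝ := ∫ x in Set.Ioo (0:ℝ) (Real.pi/2), 1 / Real.sqrt (1 + Real.sin x ^ 2)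

theorem ellK_lem : ellK (Real.sqrt 2) 1 = 2 * lem := by
  rw [ellK_half, lem]
  congr 1
  have hs2 : 0 < Real.sqrt 2 := by positivity
  have himg : (fun t : ℝ => Real.sqrt 2 * Real.tan t) '' Set.Ioo 0 (Real.pi/2) = Set.Ioi 0 := by
    ext u
    constructor
    · rintro ⟨x, ⟨h1, h2⟩, rfl⟩
      exact mul_pos hs2 (Real.tan_pos_of_pos_of_lt_pi_div_two h1 h2)
    · intro hu
      have hu : 0 < u := hu
      refine ⟨Real.arctan (u / Real.sqrt 2), ⟨Real.arctan_pos.2 (by positivity), Real.arctan_lt_pi_div_two _⟩, ?_⟩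
      simp only [Real.tan_arctan]
      field_simp
  have hsub : Set.Ioo 0 (Real.pi/2) ⊆ Set.Ioo (-(Real.pi/2)) (Real.pi/2) :=
    Set.Ioo_subset_Ioo_left (by linarith [Real.pi_pos])
  have hinj : Set.InjOn (fun t : ℝ => Real.sqrt 2 * Real.tan t) (Set.Ioo 0 (Real.pi/2)) := by
    intro x hx y hy h
    exact Real.injOn_tan (hsub hx) (hsub hy) (mul_left_cancel₀ hs2.ne' h)
  have hcos : ∀ x ∈ Set.Ioo (0:ℝ) (Real.pi/2), 0 < Real.cos x := fun x hx =>
    Real.cos_pos_of_mem_Ioo (hsub hx)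
  have hder : ∀ x ∈ Set.Ioo (0:ℝ) (Real.pi/2),
      HasDerivWithinAt (fun t : ℝ => Real.sqrt 2 * Real.tan t)
      (Real.sqrt 2 * (1 / Real.cos x ^ 2)) (Set.Ioo 0 (Real.pi/2)) x := fun x hx =>
    ((Real.hasDerivAt_tan (hcos x hx).ne').const_mul _).hasDerivWithinAt
  have := MeasureTheory.integral_image_eq_integral_abs_deriv_smul measurableSet_Ioo hder hinj
    (fun t => 1 / Real.sqrt ((t^2 + Real.sqrt 2^2) * (t^2 + 1^2)))
  rw [himg] at this
  rw [this]
  refine MeasureTheory.setIntegral_congr_fun measurableSet_Ioo fun t ht => ?_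
  have hc := hcos t ht
  have hq : Real.sqrt 2 ^ 2 = 2 := Real.sq_sqrt (by norm_num)
  have e : ((Real.sqrt 2 * Real.tan t)^2 + Real.sqrt 2^2) * ((Real.sqrt 2 * Real.tan t)^2 + 1^2)
      = (Real.sqrt 2 * (1 / Real.cos t ^ 2))^2 * (1 + Real.sin t ^2) := by
    rw [mul_pow, mul_pow, hq, Real.tan_eq_sin_div_cos]
    field_simp
    have := Real.sin_sq_add_cos_sq t
    have h' : Real.cos t ^ 2 = 1 - Real.sin t ^ 2 := by linarith
    rw [h']; ring
  rw [e, Real.sqrt_mul (by positivity), Real.sqrt_sq (by positivity), abs_of_pos (by positivity),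
    smul_eq_mul]
  have : 0 < Real.sqrt (1 + Real.sin t ^2) := Real.sqrt_pos.2 (by positivity)
  field_simp

theorem lem_eq_beta : lem = 1/4 * (Real.Gamma (1/4) * Real.Gamma (1/2) / Real.Gamma (3/4)) := by
  have hB := ProbabilityTheory.beta_eq_betaIntegralReal (1/4) (1/2) (by norm_num) (by norm_num)
  rw [ProbabilityTheory.beta, show (1/4 + 1/2 : ℝ) = 3/4 by norm_num] at hB
  rw [hB]
  have hreal : (Complex.betaIntegral ((1/4 : ℝ) : ℂ) ((1/2 : ℝ) : ℂ)).re =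
      ∫ x in Set.Ioo (0:ℝ) 1, x ^ (-(3/4) : ℝ) * (1 - x) ^ (-(1/2) : ℝ) := by
    rw [Complex.betaIntegral, intervalIntegral.integral_of_le zero_le_one,
      MeasureTheory.integral_Ioc_eq_integral_Ioo, ← Complex.ofReal_re (∫ x in Set.Ioo (0:ℝ) 1, _),
      ← integral_complex_ofReal]
    congr 1
    refine MeasureTheory.setIntegral_congr_fun measurableSet_Ioo fun x hx => ?_
    rw [Complex.ofReal_mul, Complex.ofReal_cpow hx.1.le, Complex.ofReal_cpow (by linarith [hx.2])]
    push_cast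
    norm_num
  rw [hreal]
  have hpow : ∀ θ ∈ Set.Ioo (0:ℝ) (Real.pi/2), 0 < Real.sin θ ∧ 0 < Real.cos θ := fun x hx =>
    ⟨Real.sin_pos_of_pos_of_lt_pi hx.1 (by linarith [hx.2, Real.pi_pos]),
     Real.cos_pos_of_mem_Ioo ⟨by linarith [hx.1, Real.pi_pos], hx.2⟩⟩
  have himg : (fun t : ℝ => Real.sin t ^ 4) '' Set.Ioo 0 (Real.pi/2) = Set.Ioo 0 1 := by
    ext u
    constructor
    · rintro ⟨x, hx, rfl⟩
      obtain ⟨h1, h2⟩ := hpow x hx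
      have : Real.sin x < 1 := by nlinarith [Real.sin_sq_add_cos_sq x]
      exact ⟨by positivity, pow_lt_one₀ h1.le this (by norm_num)⟩
    · rintro ⟨h1, h2⟩
      have hs : 0 < Real.sqrt (Real.sqrt u) := by positivity
      have hs1 : Real.sqrt (Real.sqrt u) < 1 := by
        rw [Real.sqrt_lt' one_pos, one_pow, Real.sqrt_lt' one_pos]; linarith
      refine ⟨Real.arcsin (Real.sqrt (Real.sqrt u)), ⟨Real.arcsin_pos.2 hs, Real.arcsin_lt_pi_div_two.2 hs1⟩, ?_⟩
      simp only
      rw [Real.sin_arcsin (by linarith) hs1.le, show 4 = 2 * 2 by norm_num, pow_mul,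
        Real.sq_sqrt (by positivity), Real.sq_sqrt h1.le]
  have hinj : Set.InjOn (fun t : ℝ => Real.sin t ^ 4) (Set.Ioo 0 (Real.pi/2)) := by
    intro x hx y hy h
    have := (pow_left_inj₀ (hpow x hx).1.le (hpow y hy).1.le (by norm_num)).1 h
    exact Real.injOn_sin ⟨by linarith [hx.1, Real.pi_pos], hx.2.le⟩
      ⟨by linarith [hy.1, Real.pi_pos], hy.2.le⟩ this
  have hder : ∀ x ∈ Set.Ioo (0:ℝ) (Real.pi/2), HasDerivWithinAt (fun t : ℝ => Real.sin t ^ 4)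
      (4 * Real.sin x ^ 3 * Real.cos x) (Set.Ioo 0 (Real.pi/2)) x := fun x hx => by
    have := ((Real.hasDerivAt_sin x).pow 4).hasDerivWithinAt (s := Set.Ioo 0 (Real.pi/2))
    have e : (fun t : ℝ => Real.sin t ^ 4) = Real.sin ^ 4 := rfl
    rw [e]
    simpa using! this
  have := MeasureTheory.integral_image_eq_integral_abs_deriv_smul measurableSet_Ioo hder hinj
    (fun x => x ^ (-(3/4) : ℝ) * (1 - x) ^ (-(1/2) : ℝ))
  rw [himg] at this
  rw [this, lem, ← MeasureTheory.integral_const_mul]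
  refine MeasureTheory.setIntegral_congr_fun measurableSet_Ioo fun t ht => ?_
  obtain ⟨h1, h2⟩ := hpow t ht
  have e1 : (Real.sin t ^ 4) ^ (-(3/4) : ℝ) = (Real.sin t ^ 3)⁻¹ := by
    rw [← Real.rpow_natCast, ← Real.rpow_mul h1.le, ← Real.rpow_natCast, ← Real.rpow_neg h1.le]
    norm_num
  have e2 : 1 - Real.sin t ^ 4 = Real.cos t ^ 2 * (1 + Real.sin t ^ 2) := by
    rw [Real.cos_sq']; ring
  have e3 : (1 - Real.sin t ^ 4) ^ (-(1/2) : ℝ) = (Real.cos t * Real.sqrt (1 + Real.sin t ^ 2))⁻¹ := by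
    rw [e2, Real.rpow_neg (by positivity), ← Real.sqrt_eq_rpow, Real.sqrt_mul (by positivity),
      Real.sqrt_sq h2.le]
  have : 0 < Real.sqrt (1 + Real.sin t ^2) := Real.sqrt_pos.2 (by positivity)
  rw [e1, e3, abs_of_pos (by positivity), smul_eq_mul]
  field_simp

noncomputable def cf (n : ℕ) : ℝ := (ascPochhammer ℝ n).eval (1/2) / (n.factorial : ℝ)

theorem cf_pos (n : ℕ) : 0 < cf n :=
  div_pos (ascPochhammer_pos n _ (by norm_num)) (by positivity)

theorem cf_prod (n : ℕ) : cf n = ∏ i ∈ Finset.range n, (2 * (i : ℝ) + 1) / (2 * i + 2) := by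
  induction n with
  | zero => simp [cf]
  | succ n ih =>
    rw [Finset.prod_range_succ, ← ih, cf, cf, ascPochhammer_succ_eval, Nat.factorial_succ]
    push_cast
    field_simp
    ring

theorem cf_hasSum {x : ℝ} (h0 : 0 ≤ x) (h1 : x < 1) :
    HasSum (fun n => cf n * x ^ n) (1 / Real.sqrt (1 - x)) := by
  have h := (Real.one_div_one_sub_rpow_hasFPowerSeriesOnBall_zero (1/2)).hasSum (y := x)
    (by simp [enorm_eq_nnnorm, ← NNReal.coe_lt_coe, abs_of_nonneg h0, h1])
  simp only [zero_add, ← Real.sqrt_eq_rpow] at h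
  have e : ∀ n : ℕ, cf n * x ^ n = (FormalMultilinearSeries.ofScalars ℝ (fun n : ℕ => Ring.choose (1 / 2 + (n:ℝ) - 1) n) n) fun _ => x := ?_
  · simp only [e]; exact h
  intro n
  have hm := Ring.factorial_nsmul_multichoose_eq_ascPochhammer (1/2 : ℝ) n
  rw [Ring.multichoose_eq, Polynomial.ascPochhammer_smeval_eq_eval, nsmul_eq_mul] at hm
  have hf : (n.factorial : ℝ) ≠ 0 := by positivity
  have hcf : cf n = Ring.choose (1 / 2 + (n:ℝ) - 1) n := by
    rw [cf, ← hm, mul_div_cancel_left₀ _ hf]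
  rw [hcf]
  simp [FormalMultilinearSeries.ofScalars]

theorem int_cos (n : ℕ) : ∫ x in Set.Ioo (0:ℝ) (Real.pi/2), Real.cos x ^ (2*n) =
    Real.pi / 2 * cf n := by
  have := EulerSine.integral_cos_pow_eq (2*n)
  rw [intervalIntegral.integral_of_le (by positivity),
    MeasureTheory.integral_Ioc_eq_integral_Ioo] at this
  rw [this, integral_sin_pow_even, cf_prod]; ring

theorem lem_hyp : lem = Real.pi / 2 / Real.sqrt 2 * hyp2F1 (1/2) (1/2) 1 (1/2) := by
  have key : HasSum (fun n => ∫ x in Set.Ioo (0:ℝ) (Real.pi/2),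
      (1/Real.sqrt 2) * (cf n * (Real.cos x ^2 / 2)^n)) lem := by
    refine MeasureTheory.hasSum_integral_of_dominated_convergence
      (fun n _ => (1/Real.sqrt 2) * (cf n * (1/2)^n)) (fun n => ?_) (fun n => ?_) ?_ ?_ ?_
    · exact Continuous.aestronglyMeasurable (by fun_prop)
    · refine Filter.Eventually.of_forall fun x => ?_
      have := cf_pos n
      rw [Real.norm_of_nonneg (by positivity)]
      gcongr
      exact Real.cos_sq_le_one x
    · refine Filter.Eventually.of_forall fun x => ?_
      exact (cf_hasSum (by norm_num) (by norm_num)).summable.mul_left _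
    · exact MeasureTheory.integrable_const _
    · refine Filter.Eventually.of_forall fun x => ?_
      have h := (cf_hasSum (x := Real.cos x ^2/2) (by positivity)
        (by linarith [Real.cos_sq_le_one x])).mul_left (1/Real.sqrt 2)
      have e : 1 / Real.sqrt (1 + Real.sin x ^ 2) =
          1 / Real.sqrt 2 * (1 / Real.sqrt (1 - Real.cos x ^2/2)) := by
        rw [one_div_mul_one_div, ← Real.sqrt_mul (by norm_num), Real.sin_sq]
        congr 2; ring
      rw [e]
      exact h
  rw [← key.tsum_eq, hyp2F1, ← tsum_mul_left]
  refine tsum_congr fun n => ?_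
  have : ∀ x, (1/Real.sqrt 2) * (cf n * (Real.cos x ^2 / 2)^n) =
     ((1/Real.sqrt 2) * (cf n / 2 ^n)) * Real.cos x ^ (2*n) := by
    intro x; rw [div_pow, pow_mul]; ring
  simp only [this]
  rw [MeasureTheory.integral_const_mul, int_cos, ascPochhammer_eval_one, cf, div_pow, one_pow]
  field_simp

theorem gamma_refl : Real.Gamma (1/4) * Real.Gamma (3/4) = Real.pi * Real.sqrt 2 := by
  have h := Real.Gamma_mul_Gamma_one_sub (1/4)
  rw [show (1 - 1/4 : ℝ) = 3/4 by norm_num, show Real.pi * (1/4) = Real.pi/4 by ring,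
    Real.sin_pi_div_four] at h
  rw [h]
  have := Real.mul_self_sqrt (show (0:ℝ) ≤ 2 by norm_num)
  field_simp
  linarith

theorem theta_lem : theta4 (Real.exp (-Real.pi)) ^ 2 = 2 * lem / Real.pi := by
  have h0 : 0 < Real.exp (-Real.pi) := Real.exp_pos _
  have h1 : Real.exp (-Real.pi) < 1 := by rw [Real.exp_lt_one_iff]; linarith [Real.pi_pos]
  have h := ellK_theta h0 h1
  have h4 : 0 < theta4 (Real.exp (-Real.pi)) ^ 2 := by
    have := theta4_ne_zero h0 h1
    positivity
  rw [theta_special] at h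
  have h2 := ellK_scale h4 (Real.sqrt 2) 1
  rw [one_mul, h, ellK_lem] at h2
  have := Real.pi_pos
  rw [eq_div_iff h4.ne'] at h2
  rw [eq_div_iff this.ne', ← h2, mul_comm]

theorem hyp2F1_half_eval :
    hyp2F1 (1/2) (1/2) 1 (1/2) =
        Real.sqrt Real.pi * Real.Gamma 1 / Real.Gamma (3/4) ^ 2 ∧
    hyp2F1 (1/2) (1/2) 1 (1/2) =
        Real.Gamma (1/4) / (Real.sqrt 2 * (Real.Gamma (1/2) * Real.Gamma (3/4))) ∧
    Real.sqrt 2 * hyp2F1 (1/2) (1/2) 1 (1/2) =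
        Real.Gamma (1/4) / (Real.Gamma (1/2) * Real.Gamma (3/4)) ∧
    Real.sqrt 2 * hyp2F1 (1/2) (1/2) 1 (1/2) = 2 * theta4 (Real.exp (-Real.pi)) ^ 2 := by
  have hpi := Real.pi_pos
  have hs2 : 0 < Real.sqrt 2 := by positivity
  have hs2s : Real.sqrt 2 ^ 2 = 2 := Real.sq_sqrt (by norm_num)
  have hsp : 0 < Real.sqrt Real.pi := by positivity
  have hsps : Real.sqrt Real.pi ^ 2 = Real.pi := Real.sq_sqrt hpi.le
  have g1 : 0 < Real.Gamma (1/4) := Real.Gamma_pos_of_pos (by norm_num)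
  have g3 : 0 < Real.Gamma (3/4) := Real.Gamma_pos_of_pos (by norm_num)
  have hr := gamma_refl
  have hB := lem_eq_beta
  have hH := lem_hyp
  have hT := theta_lem
  rw [Real.Gamma_one_half_eq] at hB
  have h3 : Real.sqrt 2 * hyp2F1 (1/2) (1/2) 1 (1/2) =
      Real.Gamma (1/4) / (Real.sqrt Real.pi * Real.Gamma (3/4)) := by
    have e : hyp2F1 (1/2) (1/2) 1 (1/2) = 2 * Real.sqrt 2 / Real.pi * lem := by
      rw [hH]; field_simp
    rw [e, hB]
    field_simp
    rw [hs2s, hsps]; ring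
  have h2 : hyp2F1 (1/2) (1/2) 1 (1/2) =
      Real.Gamma (1/4) / (Real.sqrt 2 * (Real.sqrt Real.pi * Real.Gamma (3/4))) := by
    rw [mul_comm (Real.sqrt 2), ← div_div, ← h3]; field_simp
  rw [Real.Gamma_one_half_eq, Real.Gamma_one]
  refine ⟨?_, h2, h3, ?_⟩
  · have e : Real.Gamma (1/4) = Real.pi * Real.sqrt 2 / Real.Gamma (3/4) := by
      rw [← hr]; field_simp
    rw [h2, e, ← hsps, Real.sqrt_sq hsp.le]
    field_simp
  · rw [hT, hH]
    field_simp
    try rw [hs2s]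
    try ring
end

section
/- Extremality of the minimal temperature for rectangular tori: for all α > 0 and t > 0, θ₄(e^{-πtα²}) · θ₄(e^{-πtα^{-2}}) ≤ θ₄(e^{-πt})², with equality if and only if α = 1. -/
/-- Finite `q`-Pochhammer product. -/
noncomputable def qpF (Q : ℝ) (n : ℕ) : ℝ := ∏ j ∈ Finset.range n, (1 - Q ^ (j + 1))

/-- Reciprocal of `qpF`, extended by zero to negative integers. -/
noncomputable def qpR (Q : ℝ) (m : ℤ) : ℝ := if 0 ≤ m then (qpF Q m.toNat)⁻¹ else 0

/-- Coefficients in the finite Jacobi triple product. -/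
noncomputable def tcoef (q : ℝ) (n : ℕ) (k : ℤ) : ℝ :=
  q ^ (k ^ 2) * qpF (q ^ 2) (2 * n) * (qpR (q ^ 2) (n + k) * qpR (q ^ 2) (n - k))

/-- Odd product. -/
noncomputable def oddP (q : ℝ) (n : ℕ) : ℝ := ∏ j ∈ Finset.range n, (1 - q ^ (2 * j + 1)) ^ 2

theorem one_sub_pow_pos' {Q : ℝ} (h0 : 0 < Q) (h1 : Q < 1) (j : ℕ) : 0 < 1 - Q ^ (j + 1) := by
  have := pow_lt_one₀ h0.le h1 (Nat.succ_ne_zero j)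
  simp only [Nat.succ_eq_add_one] at this
  linarith

theorem qpF_pos {Q : ℝ} (h0 : 0 < Q) (h1 : Q < 1) (n : ℕ) : 0 < qpF Q n :=
  Finset.prod_pos fun j _ => one_sub_pow_pos' h0 h1 j

theorem qpF_le_one {Q : ℝ} (h0 : 0 < Q) (h1 : Q < 1) (n : ℕ) : qpF Q n ≤ 1 :=
  Finset.prod_le_one (fun j _ => (one_sub_pow_pos' h0 h1 j).le)
    (fun j _ => by have := pow_pos h0 (j + 1); linarith)

theorem qpF_succ (Q : ℝ) (n : ℕ) : qpF Q (n + 1) = qpF Q n * (1 - Q ^ (n + 1)) :=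
  Finset.prod_range_succ _ _

theorem qpF_anti {Q : ℝ} (h0 : 0 < Q) (h1 : Q < 1) : Antitone (qpF Q) := by
  refine antitone_nat_of_succ_le fun n => ?_
  rw [qpF_succ]
  have := pow_pos h0 (n + 1)
  have := qpF_pos h0 h1 n
  nlinarith

theorem qpF_lim {Q : ℝ} (h0 : 0 < Q) (h1 : Q < 1) :
    ∃ E : ℝ, 0 < E ∧ (∀ n, E ≤ qpF Q n) ∧ Filter.Tendsto (qpF Q) Filter.atTop (nhds E) := by
  have hs : Summable (fun j : ℕ => -Q ^ (j + 1)) :=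
    ((summable_nat_add_iff 1).2 (summable_geometric_of_lt_one h0.le h1)).neg
  have hm := Real.multipliable_one_add_of_summable hs
  have hne : ∏' j : ℕ, (1 + -Q ^ (j + 1)) ≠ 0 := by
    refine tprod_one_add_ne_zero_of_summable (fun i => ?_) hs.norm
    have := one_sub_pow_pos' h0 h1 i
    linarith
  have ht : Filter.Tendsto (qpF Q) Filter.atTop (nhds (∏' j : ℕ, (1 + -Q ^ (j + 1)))) := by
    have := hm.hasProd.tendsto_prod_nat
    refine this.congr fun n => ?_
    simp only [qpF, sub_eq_add_neg]
  have hle : ∀ n, ∏' j : ℕ, (1 + -Q ^ (j + 1)) ≤ qpF Q n := fun n =>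
    (qpF_anti h0 h1).le_of_tendsto ht n
  have hnn : 0 ≤ ∏' j : ℕ, (1 + -Q ^ (j + 1)) :=
    ge_of_tendsto' ht fun n => (qpF_pos h0 h1 n).le
  exact ⟨_, lt_of_le_of_ne hnn hne.symm, hle, ht⟩

theorem qpR_rec {Q : ℝ} (h0 : 0 < Q) (h1 : Q < 1) (m : ℤ) :
    qpR Q (m - 1) = qpR Q m * (1 - Q ^ m) := by
  rcases lt_trichotomy m 0 with h | h | h
  · have h2 : ¬ (0 ≤ m - 1) := by omega
    have h3 : ¬ (0 ≤ m) := by omega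
    rw [qpR, qpR, if_neg h2, if_neg h3, zero_mul]
  · subst h
    simp [qpR]
  · obtain ⟨n, rfl⟩ : ∃ n : ℕ, m = n + 1 := ⟨(m - 1).toNat, by omega⟩
    have h2 : (0 : ℤ) ≤ n + 1 := by omega
    have h3 : ((n : ℤ) + 1).toNat = n + 1 := by omega
    simp only [qpR, add_sub_cancel_right, h2, h3, if_true, Int.natCast_nonneg, Int.toNat_natCast]
    rw [qpF_succ]
    have e : Q ^ ((n : ℤ) + 1) = Q ^ (n + 1) := by exact_mod_cast zpow_natCast Q (n + 1)
    rw [e]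
    have := (one_sub_pow_pos' h0 h1 n).ne'
    have := (qpF_pos h0 h1 n).ne'
    field_simp

theorem tcoef_rec {q : ℝ} (h0 : 0 < q) (h1 : q < 1) (n : ℕ) (k : ℤ) :
    tcoef q (n + 1) k = (1 + q ^ (4 * n + 2)) * tcoef q n k
      + q ^ (2 * n + 1) * (tcoef q n (k - 1) + tcoef q n (k + 1)) := by
  have hQ0 : 0 < q ^ 2 := by positivity
  have hQ1 : q ^ 2 < 1 := pow_lt_one₀ h0.le h1 two_ne_zero
  unfold tcoef
  have r1 : qpR (q ^ 2) (n + k) = qpR (q ^ 2) ((n + 1 : ℕ) + k) * (1 - (q ^ 2) ^ ((n : ℤ) + 1 + k)) := by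
    have := qpR_rec hQ0 hQ1 ((n : ℤ) + 1 + k)
    push_cast
    rw [← this]; congr 1; ring
  have r2 : qpR (q ^ 2) (n - k) = qpR (q ^ 2) ((n + 1 : ℕ) - k) * (1 - (q ^ 2) ^ ((n : ℤ) + 1 - k)) := by
    have := qpR_rec hQ0 hQ1 ((n : ℤ) + 1 - k)
    push_cast
    rw [← this]; congr 1; ring
  have r3 : qpR (q ^ 2) (n + (k - 1)) = qpR (q ^ 2) (n + k) * (1 - (q ^ 2) ^ ((n : ℤ) + k)) := by
    rw [← qpR_rec hQ0 hQ1]; congr 1; ring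
  have r4 : qpR (q ^ 2) (n - (k + 1)) = qpR (q ^ 2) (n - k) * (1 - (q ^ 2) ^ ((n : ℤ) - k)) := by
    rw [← qpR_rec hQ0 hQ1]; congr 1; ring
  have r5 : qpR (q ^ 2) (n - (k - 1)) = qpR (q ^ 2) ((n + 1 : ℕ) - k) := by
    congr 1; push_cast; ring
  have r6 : qpR (q ^ 2) (n + (k + 1)) = qpR (q ^ 2) ((n + 1 : ℕ) + k) := by
    congr 1; push_cast; ring
  rw [r3, r4, r5, r6, r1, r2]
  generalize qpR (q ^ 2) ((n + 1 : ℕ) + k) = A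
  generalize qpR (q ^ 2) ((n + 1 : ℕ) - k) = B
  have f1 : qpF (q ^ 2) (2 * (n + 1)) = qpF (q ^ 2) (2 * n) * (1 - q ^ 2 * (q ^ n) ^ 4) *
      (1 - q ^ 4 * (q ^ n) ^ 4) := by
    rw [show 2 * (n + 1) = 2 * n + 1 + 1 by ring, qpF_succ, qpF_succ]
    congr 2
    · congr 1; ring
    · ring
  rw [f1]
  generalize qpF (q ^ 2) (2 * n) = C
  have hq : q ≠ 0 := h0.ne'
  have z0 : ∀ m : ℤ, (q ^ 2) ^ m = (q ^ m) ^ 2 := fun m => by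
    rw [← zpow_natCast, ← zpow_natCast, ← zpow_mul, ← zpow_mul, mul_comm]
  have s1 : q ^ ((k - 1) ^ 2) = q ^ (k ^ 2) * q / (q ^ k) ^ 2 := by
    rw [show (k - 1) ^ 2 = k ^ 2 + 1 - (k + k) by ring, zpow_sub₀ hq, zpow_add₀ hq, zpow_add₀ hq, zpow_one]
    ring
  have s2 : q ^ ((k + 1) ^ 2) = q ^ (k ^ 2) * q * (q ^ k) ^ 2 := by
    rw [show (k + 1) ^ 2 = k ^ 2 + 1 + (k + k) by ring, zpow_add₀ hq, zpow_add₀ hq, zpow_add₀ hq, zpow_one]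
    ring
  rw [s1, s2]
  simp only [z0, zpow_add₀ hq, zpow_sub₀ hq, zpow_one, zpow_natCast]
  have p1 : q ^ (4 * n + 2) = q ^ 2 * (q ^ n) ^ 4 := by ring
  have p2 : q ^ (2 * n + 1) = q * (q ^ n) ^ 2 := by ring
  rw [p1, p2]
  have hy : q ^ k ≠ 0 := zpow_ne_zero k hq
  generalize q ^ (k ^ 2) = D
  generalize q ^ k = y at *
  generalize q ^ n = x
  field_simp
  ring

theorem summable_sq {q : ℝ} (h0 : 0 < q) (h1 : q < 1) : Summable (fun k : ℤ => q ^ (k ^ 2)) := by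
  have key : Summable (fun n : ℕ => q ^ ((n : ℤ) ^ 2)) := by
    refine Summable.of_nonneg_of_le (fun n => by positivity) (fun n => ?_)
      (summable_geometric_of_lt_one h0.le h1)
    have : q ^ ((n : ℤ) ^ 2) = q ^ (n ^ 2) := by exact_mod_cast zpow_natCast q (n ^ 2)
    rw [this]
    exact pow_le_pow_of_le_one h0.le h1.le (by nlinarith [Nat.le_self_pow two_ne_zero n])
  refine Summable.of_nat_of_neg key ?_
  simpa using key

theorem qpR_bound {Q E : ℝ} (hE : 0 < E) (h : ∀ n, E ≤ qpF Q n) (m : ℤ) :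
    0 ≤ qpR Q m ∧ qpR Q m ≤ E⁻¹ := by
  unfold qpR
  split_ifs
  · exact ⟨inv_nonneg.2 (hE.le.trans (h _)), inv_anti₀ hE (h _)⟩
  · exact ⟨le_rfl, (inv_pos.2 hE).le⟩

theorem tcoef_bound {q E : ℝ} (h0 : 0 < q) (h1 : q < 1) (hE : 0 < E)
    (h : ∀ n, E ≤ qpF (q ^ 2) n) (n : ℕ) (k : ℤ) :
    ‖(-1 : ℝ) ^ k * tcoef q n k‖ ≤ q ^ (k ^ 2) * (E⁻¹ * E⁻¹) := by
  have hQ0 : 0 < q ^ 2 := by positivity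
  have hQ1 : q ^ 2 < 1 := pow_lt_one₀ h0.le h1 two_ne_zero
  obtain ⟨a1, a2⟩ := qpR_bound hE h (n + k)
  obtain ⟨b1, b2⟩ := qpR_bound hE h (n - k)
  have c1 := (qpF_pos hQ0 hQ1 (2 * n)).le
  have c2 := qpF_le_one hQ0 hQ1 (2 * n)
  have d : 0 < q ^ (k ^ 2) := by positivity
  rw [norm_mul, norm_zpow, norm_neg, norm_one, one_zpow, one_mul]
  unfold tcoef
  rw [Real.norm_of_nonneg (by positivity)]
  have e1 : q ^ (k ^ 2) * qpF (q ^ 2) (2 * n) ≤ q ^ (k ^ 2) := mul_le_of_le_one_right d.le c2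
  gcongr

theorem tcoef_summable {q : ℝ} (h0 : 0 < q) (h1 : q < 1) (n : ℕ) :
    Summable (fun k : ℤ => (-1 : ℝ) ^ k * tcoef q n k) := by
  obtain ⟨E, hE, h, -⟩ := qpF_lim (Q := q ^ 2) (by positivity) (pow_lt_one₀ h0.le h1 two_ne_zero)
  exact Summable.of_norm_bounded ((summable_sq h0 h1).mul_right (E⁻¹ * E⁻¹))
    (tcoef_bound h0 h1 hE h n)

theorem tcoef_sum {q : ℝ} (h0 : 0 < q) (h1 : q < 1) (n : ℕ) :
    ∑' k : ℤ, (-1 : ℝ) ^ k * tcoef q n k = oddP q n := by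
  induction n with
  | zero =>
    rw [tsum_eq_single 0]
    · simp [tcoef, qpR, qpF, oddP]
    · intro k hk
      have : ¬ (0 ≤ k ∧ k ≤ 0) := by omega
      rcases lt_or_gt_of_ne hk with h | h
      · have : ¬ 0 ≤ k := by omega
        simp [tcoef, qpR, this]
      · have : ¬ k ≤ 0 := by omega
        simp [tcoef, qpR, this]
  | succ n ih =>
    have hs := (tcoef_summable h0 h1 n).hasSum
    rw [ih] at hs
    have hm : HasSum (fun k : ℤ => (-1 : ℝ) ^ (k - 1) * tcoef q n (k - 1)) (oddP q n) :=
      (Equiv.hasSum_iff (f := fun k : ℤ => (-1 : ℝ) ^ k * tcoef q n k) (Equiv.subRight (1 : ℤ))).2 hs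
    have hp : HasSum (fun k : ℤ => (-1 : ℝ) ^ (k + 1) * tcoef q n (k + 1)) (oddP q n) :=
      (Equiv.hasSum_iff (f := fun k : ℤ => (-1 : ℝ) ^ k * tcoef q n k) (Equiv.addRight (1 : ℤ))).2 hs
    have hall := (hs.mul_left (1 + q ^ (4 * n + 2))).sub ((hm.add hp).mul_left (q ^ (2 * n + 1)))
    have e : oddP q (n + 1) = (1 + q ^ (4 * n + 2)) * oddP q n -
        q ^ (2 * n + 1) * (oddP q n + oddP q n) := by
      unfold oddP
      rw [Finset.prod_range_succ]
      ring
    rw [e, ← hall.tsum_eq]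
    refine tsum_congr fun k => ?_
    rw [tcoef_rec h0 h1, zpow_sub₀ (by norm_num), zpow_add₀ (by norm_num)]
    simp only [zpow_one]
    ring

theorem theta4_tendsto {q : ℝ} (h0 : 0 < q) (h1 : q < 1) :
    Filter.Tendsto (fun n => oddP q n * qpF (q ^ 2) n) Filter.atTop (nhds (theta4 q)) := by
  have hQ0 : 0 < q ^ 2 := by positivity
  have hQ1 : q ^ 2 < 1 := pow_lt_one₀ h0.le h1 two_ne_zero
  obtain ⟨E, hE, h, hl⟩ := qpF_lim hQ0 hQ1
  have hR : ∀ f : ℕ → ℤ, Filter.Tendsto f Filter.atTop Filter.atTop →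
      Filter.Tendsto (fun n => qpR (q ^ 2) (f n)) Filter.atTop (nhds E⁻¹) := by
    intro f hf
    have t1 : Filter.Tendsto (fun n => (f n).toNat) Filter.atTop Filter.atTop := by
      refine Filter.tendsto_atTop.2 fun b => ?_
      filter_upwards [hf.eventually_ge_atTop (b : ℤ)] with n hn
      omega
    refine ((hl.comp t1).inv₀ hE.ne').congr' ?_
    filter_upwards [hf.eventually_ge_atTop 0] with n hn
    simp [qpR, hn]
  have ht : Filter.Tendsto (fun n => ∑' k : ℤ, (-1 : ℝ) ^ k * tcoef q n k) Filter.atTop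
      (nhds (∑' k : ℤ, (-1 : ℝ) ^ k * (q ^ (k ^ 2) * E * (E⁻¹ * E⁻¹)))) := by
    refine tendsto_tsum_of_dominated_convergence ((summable_sq h0 h1).mul_right (E⁻¹ * E⁻¹)) ?_
      (Filter.Eventually.of_forall fun n k => tcoef_bound h0 h1 hE h n k)
    intro k
    have c := tendsto_natCast_atTop_atTop (R := ℤ)
    have u1 := hR (fun n => (n : ℤ) + k) (Filter.tendsto_atTop_add_const_right _ k c)
    have u2 := hR (fun n => (n : ℤ) - k) (by
      simpa only [sub_eq_add_neg] using Filter.tendsto_atTop_add_const_right _ (-k) c)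
    have u3 : Filter.Tendsto (fun n : ℕ => qpF (q ^ 2) (2 * n)) Filter.atTop (nhds E) :=
      hl.comp (Filter.tendsto_id.const_mul_atTop' two_pos)
    exact ((u3.const_mul _).mul (u1.mul u2)).const_mul _
  have e : theta4 q = (∑' k : ℤ, (-1 : ℝ) ^ k * (q ^ (k ^ 2) * E * (E⁻¹ * E⁻¹))) * E := by
    rw [theta4, ← tsum_mul_right]
    refine tsum_congr fun k => ?_
    field_simp
  rw [e]
  refine (ht.mul hl).congr fun n => ?_
  rw [tcoef_sum h0 h1]

theorem theta4_pos {q : ℝ} (h0 : 0 < q) (h1 : q < 1) : 0 < theta4 q := by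
  have hQ0 : 0 < q ^ 2 := by positivity
  have hQ1 : q ^ 2 < 1 := pow_lt_one₀ h0.le h1 two_ne_zero
  obtain ⟨E, hE, h, -⟩ := qpF_lim hQ0 hQ1
  obtain ⟨G, hG, h', -⟩ := qpF_lim h0 h1
  have key : ∀ n, qpF q (2 * n) ^ 2 ≤ oddP q n := by
    intro n
    induction n with
    | zero => simp [qpF, oddP]
    | succ n ih =>
      have e : oddP q (n + 1) = oddP q n * (1 - q ^ (2 * n + 1)) ^ 2 := Finset.prod_range_succ _ _
      rw [show 2 * (n + 1) = 2 * n + 1 + 1 by ring, qpF_succ, qpF_succ, e, mul_pow, mul_pow]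
      have a1 := one_sub_pow_pos' h0 h1 (2 * n + 1)
      have a2 : 1 - q ^ (2 * n + 1 + 1) ≤ 1 := by
        have := pow_pos h0 (2 * n + 1 + 1); linarith
      have a3 : (1 - q ^ (2 * n + 1 + 1)) ^ 2 ≤ 1 := pow_le_one₀ a1.le a2
      exact (mul_le_of_le_one_right (by positivity) a3).trans (by gcongr)
  have : G ^ 2 * E ≤ theta4 q := by
    refine ge_of_tendsto' (theta4_tendsto h0 h1) fun n => ?_
    have b1 : G ^ 2 ≤ oddP q n := le_trans (by gcongr; exact h' _) (key n)
    have b2 := h n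
    exact mul_le_mul b1 b2 hE.le (le_trans (by positivity) b1)
  exact lt_of_lt_of_le (by positivity) this

theorem log_concave_aux :
    StrictConcaveOn ℝ Set.univ (fun s : ℝ => Real.log (1 - Real.exp (-Real.exp s))) := by
  have hpos : ∀ s : ℝ, 0 < 1 - Real.exp (-Real.exp s) := fun s => by
    have : Real.exp (-Real.exp s) < 1 := Real.exp_lt_one_iff.2 (by have := Real.exp_pos s; linarith)
    linarith
  have hd : ∀ s : ℝ, HasDerivAt (fun s : ℝ => Real.log (1 - Real.exp (-Real.exp s)))
      (((Real.exp (Real.exp s) - 1) / Real.exp s)⁻¹) s := by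
    intro s
    have h1 := (((Real.hasDerivAt_exp s).neg.exp).const_sub 1).log (hpos s).ne'
    convert! h1 using 1
    have := (hpos s).ne'
    have h3 : Real.exp (Real.exp s) - 1 = (1 - Real.exp (-Real.exp s)) * Real.exp (Real.exp s) := by
      rw [sub_mul, ← Real.exp_add]; simp
    rw [h3]
    simp only [Pi.neg_apply]
    rw [Real.exp_neg] at *
    field_simp
  refine StrictAnti.strictConcaveOn_univ_of_deriv
    (continuous_iff_continuousAt.2 fun s => (hd s).continuousAt) ?_
  intro a b hab
  rw [(hd a).deriv, (hd b).deriv]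
  have ea := Real.exp_pos a
  have eb := Real.exp_pos b
  have := strictConvexOn_exp.secant_strict_mono (Set.mem_univ 0) (Set.mem_univ (Real.exp a))
    (Set.mem_univ (Real.exp b)) ea.ne' eb.ne' (Real.exp_lt_exp.2 hab)
  simp only [Real.exp_zero, sub_zero] at this
  have p : 0 < (Real.exp (Real.exp a) - 1) / Real.exp a :=
    div_pos (by have := Real.add_one_lt_exp ea.ne'; linarith) ea
  exact inv_strictAnti₀ p this

theorem factor_lt {u b : ℝ} (hu : 0 < u) (hb : 0 < b) (hb1 : b ≠ 1) :
    (1 - Real.exp (-(u * b))) * (1 - Real.exp (-(u * b⁻¹))) < (1 - Real.exp (-u)) ^ 2 := by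
  have hpos : ∀ x : ℝ, 0 < x → 0 < 1 - Real.exp (-x) := fun s hs => by
    have : Real.exp (-s) < 1 := Real.exp_lt_one_iff.2 (by linarith)
    linarith
  have hl : Real.log b ≠ 0 := Real.log_ne_zero_of_pos_of_ne_one hb hb1
  have := log_concave_aux.2 (Set.mem_univ (Real.log u + Real.log b))
    (Set.mem_univ (Real.log u - Real.log b)) (fun h => hl (by linarith))
    (show (0 : ℝ) < 1 / 2 by norm_num) (show (0 : ℝ) < 1 / 2 by norm_num) (by norm_num)
  have e1 : Real.exp (Real.log u + Real.log b) = u * b := by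
    rw [Real.exp_add, Real.exp_log hu, Real.exp_log hb]
  have e2 : Real.exp (Real.log u - Real.log b) = u * b⁻¹ := by
    rw [Real.exp_sub, Real.exp_log hu, Real.exp_log hb]; rfl
  have e3 : (1 / 2 : ℝ) • (Real.log u + Real.log b) + (1 / 2 : ℝ) • (Real.log u - Real.log b)
      = Real.log u := by simp only [smul_eq_mul]; ring
  rw [e3] at this
  simp only [e1, e2, Real.exp_log hu, smul_eq_mul] at this
  have p1 := hpos (u * b) (by positivity)
  have p2 := hpos (u * b⁻¹) (by positivity)
  have p3 := hpos u hu
  rw [← Real.log_lt_log_iff (by positivity) (by positivity), Real.log_mul p1.ne' p2.ne', Real.log_pow]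
  push_cast
  linarith

theorem theta4_prod_lt {u b : ℝ} (hu : 0 < u) (hb : 0 < b) (hb1 : b ≠ 1) :
    theta4 (Real.exp (-(u * b))) * theta4 (Real.exp (-(u * b⁻¹))) < theta4 (Real.exp (-u)) ^ 2 := by
  have hq1 : ∀ x : ℝ, 0 < x → Real.exp (-x) < 1 := fun s hs => Real.exp_lt_one_iff.2 (by linarith)
  have ub : 0 < u * b := by positivity
  have ub' : 0 < u * b⁻¹ := by positivity
  set q := Real.exp (-u) with hq
  set q1 := Real.exp (-(u * b)) with hq1'
  set q2 := Real.exp (-(u * b⁻¹)) with hq2'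
  have a0 : 0 < q := Real.exp_pos _
  have a1 : 0 < q1 := Real.exp_pos _
  have a2 : 0 < q2 := Real.exp_pos _
  have c0 : q < 1 := hq1 _ hu
  have c1 : q1 < 1 := hq1 _ ub
  have c2 : q2 < 1 := hq1 _ ub'
  have fac : ∀ j : ℕ, (1 - q1 ^ (j + 1)) * (1 - q2 ^ (j + 1)) < (1 - q ^ (j + 1)) ^ 2 := by
    intro j
    have := factor_lt (u := u * ((j + 1 : ℕ) : ℝ)) (by positivity) hb hb1
    convert this using 4
    · rw [hq1', ← Real.exp_nat_mul]; congr 1; ring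
    · rw [hq2', ← Real.exp_nat_mul]; congr 1; ring
    · rw [hq, ← Real.exp_nat_mul]; congr 1; ring
  have pos1 := one_sub_pow_pos' a1 c1
  have pos2 := one_sub_pow_pos' a2 c2
  have pos0 := one_sub_pow_pos' a0 c0
  have B : ∀ n, qpF (q1 ^ 2) n * qpF (q2 ^ 2) n ≤ qpF (q ^ 2) n ^ 2 := by
    intro n
    unfold qpF
    rw [← Finset.prod_mul_distrib, ← Finset.prod_pow]
    refine Finset.prod_le_prod (fun j _ => ?_) (fun j _ => ?_)
    · have := pos1 (2 * j + 1); have := pos2 (2 * j + 1)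
      rw [← pow_mul, ← pow_mul]
      exact (mul_pos (pos1 (2 * j + 1)) (pos2 (2 * j + 1))).le
    · simp only [← pow_mul]
      exact (fac (2 * j + 1)).le
  set c := ((1 - q1) * (1 - q2) / (1 - q) ^ 2) ^ 2 with hc
  have hcpos : 0 ≤ c := by positivity
  have d1 : 0 < 1 - q1 := by linarith
  have d2 : 0 < 1 - q2 := by linarith
  have d0 : 0 < 1 - q := by linarith
  have hc1 : c < 1 := by
    have := fac 0
    simp only [zero_add, pow_one] at this
    refine pow_lt_one₀ (by positivity) ?_ two_ne_zero
    rw [div_lt_one (by positivity)]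
    exact this
  have A : ∀ n, oddP q1 (n + 1) * oddP q2 (n + 1) ≤ c * oddP q (n + 1) ^ 2 := by
    intro n
    unfold oddP
    rw [Finset.prod_range_succ', Finset.prod_range_succ', Finset.prod_range_succ']
    have h := Finset.prod_le_prod (s := Finset.range n)
      (f := fun j => (1 - q1 ^ (2 * (j + 1) + 1)) ^ 2 * (1 - q2 ^ (2 * (j + 1) + 1)) ^ 2)
      (g := fun j => ((1 - q ^ (2 * (j + 1) + 1)) ^ 2) ^ 2)
      (fun j _ => by positivity) (fun j _ => by
        rw [← mul_pow]
        have := (fac (2 * (j + 1))).le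
        have := mul_pos (pos1 (2 * (j + 1))) (pos2 (2 * (j + 1)))
        gcongr)
    rw [Finset.prod_mul_distrib, Finset.prod_pow _ 2 (fun j => (1 - q ^ (2 * (j + 1) + 1)) ^ 2)] at h
    have h2 := mul_le_mul_of_nonneg_right h (show 0 ≤ ((1 - q1) * (1 - q2)) ^ 2 by positivity)
    have e : c * (1 - q) ^ 4 = ((1 - q1) * (1 - q2)) ^ 2 := by
      rw [hc]; field_simp
    simp only [mul_zero, zero_add, pow_one]
    calc _ = _ := by ring
      _ ≤ _ := h2
      _ = _ := by rw [← e]; ring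
  have T1 := theta4_tendsto a1 c1
  have T2 := theta4_tendsto a2 c2
  have T0 := theta4_tendsto a0 c0
  have hle : theta4 q1 * theta4 q2 ≤ c * theta4 q ^ 2 := by
    refine le_of_tendsto_of_tendsto (T1.mul T2) ((T0.pow 2).const_mul c) ?_
    filter_upwards [Filter.eventually_ge_atTop 1] with n hn
    obtain ⟨m, rfl⟩ : ∃ m, n = m + 1 := ⟨n - 1, by omega⟩
    have hA := A m
    have hB := B (m + 1)
    have p1 := qpF_pos (Q := q1 ^ 2) (by positivity) (pow_lt_one₀ a1.le c1 two_ne_zero) (m + 1)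
    have p2 := qpF_pos (Q := q2 ^ 2) (by positivity) (pow_lt_one₀ a2.le c2 two_ne_zero) (m + 1)
    calc _ = (oddP q1 (m + 1) * oddP q2 (m + 1)) * (qpF (q1 ^ 2) (m + 1) * qpF (q2 ^ 2) (m + 1)) := by ring
      _ ≤ (c * oddP q (m + 1) ^ 2) * qpF (q ^ 2) (m + 1) ^ 2 :=
        mul_le_mul hA hB (by positivity) (by positivity)
      _ = _ := by ring
  have := theta4_pos a0 c0
  have h2 : 0 < theta4 q ^ 2 := by positivity
  nlinarith

theorem theta4_product_max (α t : ℝ) (hα : 0 < α) (ht : 0 < t) :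
    theta4 (Real.exp (-Real.pi * t * α^2)) * theta4 (Real.exp (-Real.pi * t * α^(-2:ℤ))) ≤
      theta4 (Real.exp (-Real.pi * t)) ^ 2 ∧
    (theta4 (Real.exp (-Real.pi * t * α^2)) * theta4 (Real.exp (-Real.pi * t * α^(-2:ℤ))) =
        theta4 (Real.exp (-Real.pi * t)) ^ 2 ↔ α = 1) := by
  by_cases h : α = 1
  · subst h
    simp [sq]
  · have hb : α ^ 2 ≠ 1 := fun h' => h ((pow_eq_one_iff_of_nonneg hα.le two_ne_zero).1 h')
    have := theta4_prod_lt (u := Real.pi * t) (mul_pos Real.pi_pos ht) (by positivity) hb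
    have e1 : -Real.pi * t * α ^ 2 = -(Real.pi * t * α ^ 2) := by ring
    have e2 : -Real.pi * t * α ^ (-2 : ℤ) = -(Real.pi * t * (α ^ 2)⁻¹) := by
      rw [zpow_neg]; norm_cast; ring
    have e3 : -Real.pi * t = -(Real.pi * t) := by ring
    rw [e1, e2, e3]
    exact ⟨this.le, fun h' => absurd h' this.ne, fun h' => absurd h' h⟩
end

section
/- Borwein cubic identity: for q ∈ (0,1), a(q)³ = b(q)³ + c(q)³, where a(q) = ∑_{(k,l)∈ℤ²} q^{k²+kl+l²}, b(q) = ∑_{(k,l)∈ℤ²} q^{k²+kl+l²} e^{2πi(k-l)/3}, and c(q) = ∑_{(k,l)∈ℤ²} q^{(k+1/3)²+(k+1/3)(l+1/3)+(l+1/3)²}. -/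
namespace BorweinAux

/-- Norm form. -/
def nf (x y : ℝ) : ℝ := x ^ 2 + x * y + y ^ 2

/-- Shifted theta summand. -/
noncomputable def th (q s : ℝ) (p : ℤ × ℤ) : ℝ := q ^ nf ((p.1 : ℝ) + s) ((p.2 : ℝ) + s)

/-- Twisted summand. -/
noncomputable def tw (q s : ℝ) (z : ℂ) (p : ℤ × ℤ) : ℂ := (th q s p : ℂ) * z ^ (p.1 - p.2)

lemma summable_abs (r : ℝ) (h0 : 0 < r) (h1 : r < 1) :
    Summable (fun k : ℤ => r ^ |(k : ℝ)|) := by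
  have h : Summable (fun n : ℕ => r ^ n) := summable_geometric_of_lt_one h0.le h1
  refine Summable.of_nat_of_neg ?_ ?_
  · refine h.congr fun n => ?_
    simp
  · refine h.congr fun n => ?_
    simp

lemma sq_bound (s : ℝ) (hs : s = 0 ∨ s = 1 / 3) (k : ℤ) :
    |(k : ℝ)| / 3 ≤ ((k : ℝ) + s) ^ 2 := by
  rcases le_or_gt 0 k with h | h
  · have hk : (0 : ℝ) ≤ k := by exact_mod_cast h
    rw [abs_of_nonneg hk]
    have : (k : ℝ) ≤ (k : ℝ) ^ 2 := by
      have : k ≤ k ^ 2 := by nlinarith [sq_nonneg k, Int.le_self_sq k]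
      exact_mod_cast this
    rcases hs with rfl | rfl <;> nlinarith
  · have hk : (k : ℝ) ≤ -1 := by
      have : k ≤ -1 := by omega
      exact_mod_cast this
    rw [abs_of_neg (by linarith)]
    rcases hs with rfl | rfl <;> nlinarith

lemma summable_th (q : ℝ) (h0 : 0 < q) (h1 : q < 1) (s : ℝ) (hs : s = 0 ∨ s = 1 / 3) :
    Summable (th q s) := by
  have hr0 : 0 < q ^ (1 / 6 : ℝ) := Real.rpow_pos_of_pos h0 _
  have hr1 : q ^ (1 / 6 : ℝ) < 1 := Real.rpow_lt_one h0.le h1 (by norm_num)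
  have hS := summable_abs _ hr0 hr1
  have hP := hS.mul_of_nonneg hS (fun k => by positivity) (fun k => by positivity)
  refine Summable.of_nonneg_of_le (fun p => ?_) (fun p => ?_) hP
  · exact Real.rpow_nonneg h0.le _
  · show q ^ nf _ _ ≤ _
    rw [← Real.rpow_mul h0.le, ← Real.rpow_mul h0.le, ← Real.rpow_add h0]
    apply Real.rpow_le_rpow_of_exponent_ge h0 h1.le
    have e1 := sq_bound s hs p.1
    have e2 := sq_bound s hs p.2
    unfold nf
    nlinarith [sq_nonneg (((p.1 : ℝ) + s) + ((p.2 : ℝ) + s))]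

lemma norm_one_of_cube (z : ℂ) (hz : z ^ 3 = 1) : ‖z‖ = 1 :=
  Complex.norm_eq_one_of_pow_eq_one hz (by norm_num)

lemma summable_tw (q : ℝ) (h0 : 0 < q) (h1 : q < 1) (s : ℝ) (hs : s = 0 ∨ s = 1 / 3)
    (z : ℂ) (hz : z ^ 3 = 1) : Summable (fun p => ‖tw q s z p‖) := by
  refine (summable_th q h0 h1 s hs).congr fun p => ?_
  have : 0 ≤ th q s p := Real.rpow_nonneg h0.le _
  simp [tw, norm_one_of_cube z hz, abs_of_nonneg this]

lemma hasSum_cube {P : Type} (f : P → ℂ) (hf : Summable (fun p => ‖f p‖)) :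
    HasSum (fun x : P × P × P => f x.1 * (f x.2.1 * f x.2.2)) ((∑' p, f p) ^ 3) := by
  have h2 : Summable (fun x : P × P => ‖f x.1 * f x.2‖) := hf.mul_norm hf
  have h3 := summable_mul_of_summable_norm hf h2
  have e2 := tsum_mul_tsum_of_summable_norm hf hf
  have e3 := tsum_mul_tsum_of_summable_norm hf h2
  have : (∑' p, f p) ^ 3 = ∑' x : P × P × P, f x.1 * (f x.2.1 * f x.2.2) := by
    rw [← e3, ← e2]; ring
  rw [this]
  exact h3.hasSum

lemma zpow_three (z : ℂ) (hz : z ^ 3 = 1) (m : ℤ) : z ^ (3 * m) = 1 := by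
  rw [zpow_mul]
  have : z ^ (3 : ℤ) = 1 := by exact_mod_cast hz
  rw [this, one_zpow]

/-- Weight detecting multiples of three. -/
noncomputable def wt (z : ℂ) (n : ℤ) : ℂ := 1 + z ^ n + (z ^ 2) ^ n

lemma wt_three (z : ℂ) (hz : z ^ 3 = 1) (m : ℤ) : wt z (3 * m) = 3 := by
  have h2 : (z ^ 2) ^ 3 = 1 := by rw [← pow_mul, mul_comm, pow_mul, hz, one_pow]
  rw [wt, zpow_three z hz, zpow_three _ h2]; norm_num

lemma wt_ne (z : ℂ) (hz : z ^ 3 = 1) (hs : 1 + z + z ^ 2 = 0) (n : ℤ) (h : wt z n ≠ 0) :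
    ∃ m, n = 3 * m := by
  have z0 : z ≠ 0 := by rintro rfl; norm_num at hz
  have h2 : (z ^ 2) ^ 3 = 1 := by rw [← pow_mul, mul_comm, pow_mul, hz, one_pow]
  have h4 : z ^ 4 = z := by rw [pow_succ, hz, one_mul]
  obtain ⟨m, hm⟩ : ∃ m, n = 3 * m ∨ n = 3 * m + 1 ∨ n = 3 * m + 2 := ⟨n / 3, by omega⟩
  rcases hm with hm | hm | hm
  · exact ⟨m, hm⟩
  · exfalso; apply h
    rw [hm, wt, zpow_add₀ z0, zpow_add₀ (pow_ne_zero 2 z0), zpow_three z hz, zpow_three _ h2]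
    simpa using hs
  · exfalso; apply h
    rw [hm, wt, zpow_add₀ z0, zpow_add₀ (pow_ne_zero 2 z0), zpow_three z hz, zpow_three _ h2]
    have e1 : z ^ (2 : ℤ) = z ^ 2 := by norm_cast
    have e2 : (z ^ 2) ^ (2 : ℤ) = z := by
      have : (z ^ 2) ^ (2 : ℤ) = z ^ 4 := by norm_cast; rw [← pow_mul]
      rw [this, h4]
    rw [e1, e2, ← hs]; ring

abbrev T := (ℤ × ℤ) × (ℤ × ℤ) × (ℤ × ℤ)

/-- Total character exponent. -/
def ex (x : T) : ℤ := (x.1.1 - x.1.2) + ((x.2.1.1 - x.2.1.2) + (x.2.2.1 - x.2.2.2))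

/-- Triple theta summand. -/
noncomputable def tp (q s : ℝ) (x : T) : ℂ := ((th q s x.1 * (th q s x.2.1 * th q s x.2.2) : ℝ) : ℂ)

lemma tw_prod (q s : ℝ) (z : ℂ) (z0 : z ≠ 0) (x : T) :
    tw q s z x.1 * (tw q s z x.2.1 * tw q s z x.2.2) = tp q s x * z ^ ex x := by
  unfold tw tp ex
  rw [zpow_add₀ z0, zpow_add₀ z0]
  push_cast
  ring

lemma hasSum_tp (q : ℝ) (h0 : 0 < q) (h1 : q < 1) (s : ℝ) (hs : s = 0 ∨ s = 1 / 3)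
    (z : ℂ) (hz : z ^ 3 = 1) :
    HasSum (fun x : T => tp q s x * z ^ ex x) ((∑' p, tw q s z p) ^ 3) := by
  have z0 : z ≠ 0 := by rintro rfl; norm_num at hz
  refine (hasSum_cube _ (summable_tw q h0 h1 s hs z hz)).congr_fun fun x => ?_
  exact (tw_prod q s z z0 x).symm

/-- Rotation fixing the shifted lattice. -/
def rot : ℤ × ℤ ≃ ℤ × ℤ where
  toFun p := (p.2, -p.1 - p.2 - 1)
  invFun p := (-p.1 - p.2 - 1, p.1)
  left_inv p := by
    ext
    all_goals dsimp only
    all_goals ring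
  right_inv p := by
    ext
    all_goals dsimp only
    all_goals ring

lemma tw_c_zero (q : ℝ) (z : ℂ) (hz : z ^ 3 = 1) (h1 : z ≠ 1) :
    ∑' p, tw q (1 / 3) z p = 0 := by
  have z0 : z ≠ 0 := by rintro rfl; norm_num at hz
  have h : ∑' p, tw q (1 / 3) z p = z * ∑' p, tw q (1 / 3) z p := by
    rw [← tsum_mul_left, ← rot.tsum_eq]
    refine tsum_congr fun p => ?_
    have e1 : th q (1 / 3) (rot p) = th q (1 / 3) p := by
      unfold th nf rot
      congr 1
      simp only [Equiv.coe_fn_mk]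
      push_cast
      ring
    have e2 : (rot p).1 - (rot p).2 = 3 * p.2 + ((p.1 - p.2) + 1) := by
      simp only [rot, Equiv.coe_fn_mk]; ring
    rw [tw, tw, e1, e2, zpow_add₀ z0, zpow_three z hz, zpow_add₀ z0, zpow_one]
    ring
  have : (1 - z) * ∑' p, tw q (1 / 3) z p = 0 := by rw [sub_mul, one_mul, ← h, sub_self]
  rcases mul_eq_zero.mp this with h' | h'
  · exact absurd (sub_eq_zero.mp h').symm h1
  · exact h'

lemma tw_b_swap (q s : ℝ) (z : ℂ) (hz : z ^ 3 = 1) :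
    ∑' p, tw q s (z ^ 2) p = ∑' p, tw q s z p := by
  have z0 : z ≠ 0 := by rintro rfl; norm_num at hz
  rw [← (Equiv.prodComm ℤ ℤ).tsum_eq]
  refine tsum_congr fun p => ?_
  have e1 : th q s (Equiv.prodComm ℤ ℤ p) = th q s p := by
    unfold th nf
    congr 1
    simp only [Equiv.prodComm_apply, Prod.fst_swap, Prod.snd_swap]
    ring
  have e2 : (z ^ 2) ^ (p.2 - p.1) = z ^ (p.1 - p.2) := by
    have : (z ^ 2) ^ (p.2 - p.1) = z ^ (2 * (p.2 - p.1)) := by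
      rw [zpow_mul]; norm_cast
    rw [this, show 2 * (p.2 - p.1) = 3 * (p.2 - p.1) + (p.1 - p.2) by ring, zpow_add₀ z0,
      zpow_three z hz, one_mul]
  simp only [tw, e1]
  simp only [Equiv.prodComm_apply, Prod.fst_swap, Prod.snd_swap, e2]

/-- Parametrisation of triples whose exponent is a multiple of three. -/
def g1 (x : T) : T :=
  ((3 * x.1.1 + x.1.2 - (x.2.1.1 - x.2.1.2) - (x.2.2.1 - x.2.2.2), x.1.2), x.2.1, x.2.2)

/-- The unitary image of `g1`. -/
def g2 (x : T) : T :=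
  match x with
  | ((m, l1), (k2, l2), (k3, l3)) =>
    ((l1 + l2 + l3 + 2 * m + 1, -m),
     (l1 - k2 - l2 + k3 + 2 * (m + l2 - k3), -(m + l2 - k3)),
     (l1 + k2 - k3 - l3 + 2 * (m - k2 + l3), -(m - k2 + l3)))

lemma g1_inj : Function.Injective g1 := by
  rintro ⟨⟨m, l1⟩, ⟨k2, l2⟩, ⟨k3, l3⟩⟩ ⟨⟨m', l1'⟩, ⟨k2', l2'⟩, ⟨k3', l3'⟩⟩ h
  simp only [g1, Prod.mk.injEq] at h ⊢
  omega

lemma g2_inj : Function.Injective g2 := by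
  rintro ⟨⟨m, l1⟩, ⟨k2, l2⟩, ⟨k3, l3⟩⟩ ⟨⟨m', l1'⟩, ⟨k2', l2'⟩, ⟨k3', l3'⟩⟩ h
  simp only [g2, Prod.mk.injEq] at h ⊢
  omega

lemma g1_range (x : T) (m : ℤ) (h : ex x = 3 * m) : x ∈ Set.range g1 := by
  obtain ⟨⟨k1, l1⟩, ⟨k2, l2⟩, ⟨k3, l3⟩⟩ := x
  simp only [ex] at h
  refine ⟨((m, l1), (k2, l2), (k3, l3)), ?_⟩
  simp only [g1, Prod.mk.injEq, and_true]
  omega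

lemma g2_range (x : T) (n : ℤ) (h : ex x - 1 = 3 * n) : x ∈ Set.range g2 := by
  obtain ⟨⟨a1, b1⟩, ⟨a2, b2⟩, ⟨a3, b3⟩⟩ := x
  simp only [ex] at h
  refine ⟨((-b1, b1 + b2 + b3 + n), (n - a2 + b3, b1 + a2 - a3 - b3 + (n - a2 + b3)),
    (n + b2 - a3, b1 - a2 - b2 + a3 + (n + b2 - a3))), ?_⟩
  simp only [g2, Prod.mk.injEq]
  omega

lemma ex_g1 (x : T) : ex (g1 x) = 3 * x.1.1 := by
  simp only [ex, g1]; ring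

lemma ex_g2 (x : T) : ∃ m, ex (g2 x) - 1 = 3 * m := by
  obtain ⟨⟨m, l1⟩, ⟨k2, l2⟩, ⟨k3, l3⟩⟩ := x
  simp only [ex, g2]
  refine ⟨(l1 + l2 + l3 + 2 * m + 1 - -m + (l1 - k2 - l2 + k3 + 2 * (m + l2 - k3) - -(m + l2 - k3) +
    (l1 + k2 - k3 - l3 + 2 * (m - k2 + l3) - -(m - k2 + l3))) - 1) / 3, ?_⟩
  omega

lemma tp_eq (q : ℝ) (h0 : 0 < q) (x : T) : tp q (1 / 3) (g1 x) = tp q 0 (g2 x) := by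
  obtain ⟨⟨m, l1⟩, ⟨k2, l2⟩, ⟨k3, l3⟩⟩ := x
  simp only [tp, th, g1, g2, ← Real.rpow_add h0]
  congr 2
  unfold nf
  push_cast
  ring

lemma key (q : ℝ) (h0 : 0 < q) (z : ℂ) (hz : z ^ 3 = 1) (hs : 1 + z + z ^ 2 = 0) :
    ∑' x : T, tp q (1 / 3) x * wt z (ex x) = ∑' x : T, tp q 0 x * wt z (ex x - 1) := by
  rw [← g1_inj.tsum_eq (f := fun x : T => tp q (1 / 3) x * wt z (ex x)),
    ← g2_inj.tsum_eq (f := fun x : T => tp q 0 x * wt z (ex x - 1))]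
  · refine tsum_congr fun x => ?_
    obtain ⟨m, hm⟩ := ex_g2 x
    simp only [ex_g1, hm, wt_three z hz, tp_eq q h0]
  · intro x hx
    obtain ⟨m, hm⟩ := wt_ne z hz hs _ (right_ne_zero_of_mul hx)
    exact g2_range x m hm
  · intro x hx
    obtain ⟨m, hm⟩ := wt_ne z hz hs _ (right_ne_zero_of_mul hx)
    exact g1_range x m hm

lemma main (q : ℝ) (h0 : 0 < q) (h1 : q < 1) (z : ℂ) (hz : z ^ 3 = 1)
    (hs : 1 + z + z ^ 2 = 0) :
    (∑' p, tw q 0 1 p) ^ 3 = (∑' p, tw q 0 z p) ^ 3 + (∑' p, tw q (1 / 3) 1 p) ^ 3 := by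
  have z0 : z ≠ 0 := by rintro rfl; norm_num at hz
  have hz1 : z ≠ 1 := by rintro rfl; norm_num at hs
  have h2 : (z ^ 2) ^ 3 = 1 := by rw [← pow_mul, mul_comm, pow_mul, hz, one_pow]
  have hz2 : z ^ 2 ≠ 1 := by
    intro h
    apply hz1
    have : z ^ 3 = z := by rw [pow_succ, h, one_mul]
    rw [← this, hz]
  have c := ((hasSum_tp q h0 h1 (1 / 3) (Or.inr rfl) 1 (by norm_num)).add
    (hasSum_tp q h0 h1 (1 / 3) (Or.inr rfl) z hz)).add
    (hasSum_tp q h0 h1 (1 / 3) (Or.inr rfl) (z ^ 2) h2)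
  have a := ((hasSum_tp q h0 h1 0 (Or.inl rfl) 1 (by norm_num)).add
    ((hasSum_tp q h0 h1 0 (Or.inl rfl) z hz).mul_right (z ^ 2))).add
    ((hasSum_tp q h0 h1 0 (Or.inl rfl) (z ^ 2) h2).mul_right z)
  have k := key q h0 z hz hs
  have i1 : z⁻¹ = z ^ 2 := by
    exact inv_eq_of_mul_eq_one_right (by rw [← hz]; ring)
  have i2 : (z ^ 2)⁻¹ = z := by rw [← i1, inv_inv]
  rw [show (∑' x : T, tp q (1 / 3) x * wt z (ex x)) = _ from
      (c.congr_fun fun x => by rw [wt, one_zpow]; ring).tsum_eq,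
    show (∑' x : T, tp q 0 x * wt z (ex x - 1)) = _ from
      (a.congr_fun fun x => by
        rw [wt, one_zpow, zpow_sub_one₀ z0, zpow_sub_one₀ (pow_ne_zero 2 z0), i1, i2]
        ring).tsum_eq,
    tw_c_zero q z hz hz1, tw_c_zero q _ h2 hz2, tw_b_swap q 0 z hz] at k
  have : z ^ 2 = -1 - z := by linear_combination hs
  rw [this] at k
  linear_combination -k

end BorweinAux

open BorweinAux

theorem borwein_cubic_identity (q : ℝ) (hq : q ∈ Set.Ioo (0:ℝ) 1) :
    borA q ^ 3 = borB q ^ 3 + borC q ^ 3 := by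
  obtain ⟨h0, h1⟩ := hq
  obtain ⟨z, hzdef⟩ : ∃ z : ℂ, z = Complex.exp (2 * Real.pi * Complex.I / 3) := ⟨_, rfl⟩
  have hp : IsPrimitiveRoot z 3 := by
    rw [hzdef]; exact_mod_cast Complex.isPrimitiveRoot_exp 3 (by norm_num)
  have hz : z ^ 3 = 1 := hp.pow_eq_one
  have hs : 1 + z + z ^ 2 = 0 := by
    have := hp.geom_sum_eq_zero (by norm_num)
    simpa [Finset.sum_range_succ] using this
  have hm := main q h0 h1 z hz hs
  have hth : ∀ p : ℤ × ℤ, th q 0 p = q ^ (p.1^2 + p.1 * p.2 + p.2^2) := by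
    intro p
    rw [← Real.rpow_intCast, th, nf]
    push_cast
    simp
  have hA : ∑' p, tw q 0 1 p = (borA q : ℂ) := by
    rw [borA, Complex.ofReal_tsum]
    refine tsum_congr fun p => ?_
    rw [tw, one_zpow, mul_one, hth]
  have hC : ∑' p, tw q (1 / 3) 1 p = (borC q : ℂ) := by
    rw [borC, Complex.ofReal_tsum]
    refine tsum_congr fun p => ?_
    rw [tw, one_zpow, mul_one]
    rfl
  have hBre : borB q = (∑' p, tw q 0 z p).re := by
    rw [borB]
    congr 1
    refine tsum_congr fun p => ?_
    rw [tw, hth, hzdef, ← Complex.exp_int_mul]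
    push_cast
    congr 2
    ring
  have hconj : (starRingEnd ℂ) (∑' p, tw q 0 z p) = ∑' p, tw q 0 z p := by
    rw [Complex.conj_tsum]
    rw [← tw_b_swap q 0 z hz]
    refine tsum_congr fun p => ?_
    have hc : (starRingEnd ℂ) z = z ^ 2 := by
      rw [← Complex.inv_eq_conj (norm_one_of_cube z hz)]
      exact inv_eq_of_mul_eq_one_right (by rw [← hz]; ring)
    simp [tw, hc]
  have hB : ∑' p, tw q 0 z p = (borB q : ℂ) := by
    rw [hBre]
    exact (Complex.conj_eq_iff_re.mp hconj).symm
  rw [hA, hB, hC] at hm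
  exact_mod_cast hm
end
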